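/- arXiv:1302.4106 — 2 statements merged into one kernel-verified Lean document; each statement's English description precedes it below -/
import Mathlib

section
/- Corollary 3.4: Let 𝕄 be an infinite subset of ℕ, let Ω ⊆ ℂⁿ be an open convex set, and let (N_j)_{j≥0} be any enumeration of ℕⁿ. Then there exists f ∈ A^∞(Ω) such that: for every compact convex set K ⊆ ℂⁿ disjoint from the closure of Ω and every holomorphic polynomial P on ℂⁿ, there exists a sequence (λ_N)_{N≥1} with λ_N ∈ 𝕄 such that for every compact set L contained in the closure of Ω, sup_{ζ ∈ L, z ∈ K} ‖S_{λ_N}(f,ζ)(z) − P(z)‖ → 0 as N → ∞, and for every multi-index ℓ ∈ ℕⁿ, sup_{ζ ∈ L, z ∈ L} ‖D^ℓ[S_{λ_N}(f,ζ)](z) − (D^ℓ f)(z)‖ → 0 as N → ∞. The set of all such f is a dense G_δ subset of A^∞(Ω). -/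
open Set Filter Topology

noncomputable section

/-- Evaluation of a multivariate polynomial as a function on `ℂⁿ = Fin n → ℂ`. -/
def mvEval {n : ℕ} (p : MvPolynomial (Fin n) ℂ) : (Fin n → ℂ) → ℂ :=
  fun z => MvPolynomial.eval z p

/-- The polynomially convex hull of a set in `ℂⁿ`. -/
def polyHull {n : ℕ} (K : Set (Fin n → ℂ)) : Set (Fin n → ℂ) :=
  {z | ∀ p : MvPolynomial (Fin n) ℂ, ‖mvEval p z‖ ≤ sSup ((fun w => ‖mvEval p w‖) '' K)}

/-- A set in `ℂⁿ` is polynomially convex if it equals its polynomially convex hull. -/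
def IsPolyConvex {n : ℕ} (K : Set (Fin n → ℂ)) : Prop := polyHull K = K

/-- The polynomially convex hull of a subset of `ℂ`. -/
def polyHull1 (F : Set ℂ) : Set ℂ :=
  {z | ∀ p : Polynomial ℂ, ‖p.eval z‖ ≤ sSup ((fun w => ‖p.eval w‖) '' F)}

/-- A subset of `ℂ` is polynomially convex if it equals its polynomially convex hull. -/
def IsPolyConvex1 (F : Set ℂ) : Prop := polyHull1 F = F

/-- Partial derivative in the `i`-th coordinate direction. -/
def pd {n : ℕ} (i : Fin n) (f : (Fin n → ℂ) → ℂ) : (Fin n → ℂ) → ℂ :=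
  fun z => fderiv ℂ f z (Pi.single i 1)

/-- Iterated partial derivative `D^ℓ = ∂^{ℓ₁+⋯+ℓₙ}/∂z₁^{ℓ₁}⋯∂zₙ^{ℓₙ}`. -/
def Dml {n : ℕ} (ℓ : Fin n → ℕ) (f : (Fin n → ℂ) → ℂ) : (Fin n → ℂ) → ℂ :=
  (List.finRange n).foldr (fun i g => (pd i)^[ℓ i] g) f

/-- Partial sums `S_λ` of a Taylor-type series around `ζ`, with coefficients computed from a
given family `g` of (extended) partial derivatives: the coefficient of the monomial
`(z-ζ)^{N_j}` is `g (N_j) ζ / (N_{j,1}! ⋯ N_{j,n}!)`. -/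
def pSumExt {n : ℕ} (Nj : ℕ → Fin n → ℕ) (g : (Fin n → ℕ) → (Fin n → ℂ) → ℂ)
    (ζ : Fin n → ℂ) (lam : ℕ) : (Fin n → ℂ) → ℂ :=
  fun z => ∑ j ∈ Finset.range (lam + 1),
    (((∏ i, Nat.factorial (Nj j i) : ℕ) : ℂ))⁻¹ * g (Nj j) ζ * ∏ i, (z i - ζ i) ^ (Nj j i)

/-- Partial sums `S_λ(f,ζ)` of the Taylor development of `f` around `ζ`. -/
def pSum {n : ℕ} (Nj : ℕ → Fin n → ℕ) (f : (Fin n → ℂ) → ℂ)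
    (ζ : Fin n → ℂ) (lam : ℕ) : (Fin n → ℂ) → ℂ :=
  pSumExt Nj (fun ℓ => Dml ℓ f) ζ lam

/-- The space `O(Ω)` of holomorphic functions on `Ω`. -/
def Ospace (n : ℕ) (Ω : Set (Fin n → ℂ)) : Type :=
  {f : (Fin n → ℂ) → ℂ // DifferentiableOn ℂ f Ω}

/-- Topology of uniform convergence on compact subsets of `Ω` on `O(Ω)` (the compact-open
topology induced via restriction to `Ω`). -/
instance (n : ℕ) (Ω : Set (Fin n → ℂ)) : TopologicalSpace (Ospace n Ω) :=
  TopologicalSpace.induced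
    (fun f : Ospace n Ω =>
      (⟨Ω.restrict f.1, continuousOn_iff_continuous_restrict.mp f.2.continuousOn⟩ : C(Ω, ℂ)))
    inferInstance

/-- Membership in `A^∞(Ω)`: `f` is holomorphic on `Ω` and each partial derivative `D^ℓ f`
extends continuously to the closure of `Ω`. -/
def AinfMem (n : ℕ) (Ω : Set (Fin n → ℂ)) (f : (Fin n → ℂ) → ℂ) : Prop :=
  DifferentiableOn ℂ f Ω ∧
    ∀ ℓ : Fin n → ℕ, ∃ g : (Fin n → ℂ) → ℂ,
      ContinuousOn g (closure Ω) ∧ Set.EqOn g (Dml ℓ f) Ω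

/-- The space `A^∞(Ω)`. -/
def AinfSpace (n : ℕ) (Ω : Set (Fin n → ℂ)) : Type :=
  {f : (Fin n → ℂ) → ℂ // AinfMem n Ω f}

/-- The chosen continuous extension of `D^ℓ f` to the closure of `Ω`, for `f ∈ A^∞(Ω)`.
(Its restriction to the closure of `Ω` is uniquely determined.) -/
def AinfExt {n : ℕ} {Ω : Set (Fin n → ℂ)} (f : AinfSpace n Ω) (ℓ : Fin n → ℕ) :
    (Fin n → ℂ) → ℂ :=
  Classical.choose (f.2.2 ℓ)

lemma AinfExt_continuousOn {n : ℕ} {Ω : Set (Fin n → ℂ)} (f : AinfSpace n Ω) (ℓ : Fin n → ℕ) :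
    ContinuousOn (AinfExt f ℓ) (closure Ω) :=
  (Classical.choose_spec (f.2.2 ℓ)).1

lemma AinfExt_eqOn {n : ℕ} {Ω : Set (Fin n → ℂ)} (f : AinfSpace n Ω) (ℓ : Fin n → ℕ) :
    Set.EqOn (AinfExt f ℓ) (Dml ℓ f.1) Ω :=
  (Classical.choose_spec (f.2.2 ℓ)).2

/-- Topology on `A^∞(Ω)`: uniform convergence of every partial derivative on every compact
subset of the closure of `Ω`. -/
instance (n : ℕ) (Ω : Set (Fin n → ℂ)) : TopologicalSpace (AinfSpace n Ω) :=
  TopologicalSpace.induced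
    (fun f : AinfSpace n Ω => fun ℓ : Fin n → ℕ =>
      (⟨(closure Ω).restrict (AinfExt f ℓ),
        continuousOn_iff_continuous_restrict.mp (AinfExt_continuousOn f ℓ)⟩ :
          C(closure Ω, ℂ)))
    inferInstance

/-- A smooth compact curve in `ℂⁿ`: the image of an injective `C^∞` map with
nowhere-vanishing derivative, defined on a compact interval (an arc) or on the
circle (a closed curve, modelled by a 1-periodic map). -/
def IsSmoothCompactCurve {n : ℕ} (K : Set (Fin n → ℂ)) : Prop :=
  ∃ γ : ℝ → (Fin n → ℂ), ContDiff ℝ (⊤ : ℕ∞) γ ∧ (∀ t, deriv γ t ≠ 0) ∧ K = γ '' Set.Icc 0 1 ∧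
    (Set.InjOn γ (Set.Icc 0 1) ∨ (Function.Periodic γ 1 ∧ Set.InjOn γ (Set.Ico 0 1)))

/-- A disjoint union of finitely many smooth compact curves. -/
def IsFiniteUnionOfSmoothCurves {n : ℕ} (K : Set (Fin n → ℂ)) : Prop :=
  ∃ (m : ℕ) (C : Fin m → Set (Fin n → ℂ)),
    (∀ i, IsSmoothCompactCurve (C i)) ∧ Pairwise (Function.onFun Disjoint C) ∧ K = ⋃ i, C i


section

lemma cauchy_fderiv {E : Type*} [NormedAddCommGroup E] [NormedSpace ℂ E] {f : E → ℂ} {c : E}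
    {R M : ℝ} (hR : 0 < R) (hd : DifferentiableOn ℂ f (Metric.ball c R))
    (hM : ∀ z ∈ Metric.ball c R, ‖f z‖ ≤ M) : ‖fderiv ℂ f c‖ ≤ 2 * M / R := by
  refine Complex.norm_fderiv_le_div_of_mapsTo_ball hd ?_ hR
  intro z hz
  rw [Metric.mem_closedBall, dist_eq_norm]
  have h1 := norm_sub_le (f z) (f c)
  have h2 := hM z hz
  have h3 := hM c (Metric.mem_ball_self hR)
  linarith

lemma second_order {E : Type*} [NormedAddCommGroup E] [NormedSpace ℂ E] {f : E → ℂ} {c : E}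
    {R M : ℝ} (hR : 0 < R) (hd : DifferentiableOn ℂ f (Metric.ball c R))
    (hM : ∀ z ∈ Metric.ball c R, ‖f z‖ ≤ M) {h : E} (hh : ‖h‖ < R) :
    ‖f (c + h) - f c - fderiv ℂ f c h‖ ≤ 4 * M * (‖h‖ / R) ^ 2 := by
  have hc := cauchy_fderiv hR hd hM
  have hcb : c ∈ Metric.ball c R := Metric.mem_ball_self hR
  have hM0 : 0 ≤ M := (norm_nonneg _).trans (hM c hcb)
  let φ : E → ℂ := fun w => f w - f c - fderiv ℂ f c (w - c)
  have hφc : φ c = 0 := by simp [φ]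
  have hfc : DifferentiableAt ℂ f c := (hd c hcb).differentiableAt (Metric.ball_mem_nhds _ hR)
  have key := Complex.dist_le_mul_div_pow_of_mapsTo_ball_of_isLittleO (f := φ) (c := c)
    (z := c + h) (R₁ := R) (R₂ := 4 * M) (n := 1) ?_ ?_ ?_ ?_
  · rw [hφc, dist_zero_right] at key
    simpa [φ] using key
  · have : Differentiable ℂ (fun w => fderiv ℂ f c (w - c)) := by fun_prop
    exact (hd.sub_const _).sub this.differentiableOn
  · intro w hw
    rw [hφc, mem_closedBall_zero_iff]
    have h1 : ‖fderiv ℂ f c (w - c)‖ ≤ 2 * M := by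
      refine ((fderiv ℂ f c).le_opNorm _).trans ?_
      have : ‖w - c‖ ≤ R := by rw [← dist_eq_norm]; exact (Metric.mem_ball.1 hw).le
      calc ‖fderiv ℂ f c‖ * ‖w - c‖ ≤ 2 * M / R * R := by gcongr
        _ = 2 * M := by field_simp
    calc ‖φ w‖ ≤ ‖f w - f c‖ + ‖fderiv ℂ f c (w - c)‖ := norm_sub_le _ _
      _ ≤ ‖f w‖ + ‖f c‖ + ‖fderiv ℂ f c (w - c)‖ := by gcongr; exact norm_sub_le _ _
      _ ≤ 4 * M := by linarith [hM w hw, hM c hcb]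
  · have := hfc.hasFDerivAt.isLittleO
    simp only [hφc, sub_zero, pow_one]
    exact this.norm_right
  · simpa using hh

variable {n : ℕ}

lemma weierstrass {F : ℕ → (Fin n → ℂ) → ℂ} {f : (Fin n → ℂ) → ℂ} {V : Set (Fin n → ℂ)}
    (hV : IsOpen V) (hF : ∀ k, DifferentiableOn ℂ (F k) V)
    (h : TendstoLocallyUniformlyOn F f atTop V) :
    DifferentiableOn ℂ f V ∧
      TendstoLocallyUniformlyOn (fun k z => fderiv ℂ (F k) z) (fderiv ℂ f) atTop V := by
  -- local uniform Cauchy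
  have hloc : ∀ x ∈ V, ∃ r > 0, Metric.ball x r ⊆ V ∧
      UniformCauchySeqOn (fun k z => fderiv ℂ (F k) z) atTop (Metric.ball x r) := by
    intro x hx
    obtain ⟨R, hR, hRV⟩ := Metric.isOpen_iff.1 hV x hx
    have hsub : Metric.closedBall x (R/2) ⊆ V :=
      (Metric.closedBall_subset_ball (by linarith)).trans hRV
    refine ⟨R/4, by positivity, (Metric.ball_subset_ball (by linarith)).trans hRV, ?_⟩
    have hu := (tendstoLocallyUniformlyOn_iff_forall_isCompact hV).1 h _ hsub
      (isCompact_closedBall x (R/2))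
    have huc := hu.uniformCauchySeqOn
    rw [Metric.uniformCauchySeqOn_iff] at huc ⊢
    intro ε hε
    obtain ⟨N, hN⟩ := huc (ε * R / 16) (by positivity)
    refine ⟨N, fun a ha b hb z hz => ?_⟩
    have hzsub : Metric.ball z (R/4) ⊆ Metric.closedBall x (R/2) := by
      intro w hw
      rw [Metric.mem_closedBall]
      have := dist_triangle w z x
      have h1 := Metric.mem_ball.1 hw
      have h2 := Metric.mem_ball.1 hz
      linarith
    have hzV : z ∈ V := hsub (hzsub (Metric.mem_ball_self (by positivity)))
    have da := (hF a z hzV).differentiableAt (hV.mem_nhds hzV)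
    have db := (hF b z hzV).differentiableAt (hV.mem_nhds hzV)
    rw [dist_eq_norm, ← fderiv_sub da db]
    have := cauchy_fderiv (f := F a - F b) (c := z) (R := R/4) (M := ε * R / 16) (by positivity)
      (((hF a).sub (hF b)).mono (hzsub.trans hsub)) (fun w hw => by
        have := hN a ha b hb w (hzsub hw)
        rw [dist_eq_norm] at this
        exact this.le)
    refine this.trans_lt ?_
    have : 2 * (ε * R / 16) / (R / 4) = ε / 2 := by field_simp; ring
    rw [this]; linarith
  have hex : ∀ z, ∃ L, z ∈ V → Tendsto (fun k => fderiv ℂ (F k) z) atTop (𝓝 L) := by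
    intro z
    by_cases hz : z ∈ V
    · obtain ⟨r, hr, _, hc⟩ := hloc z hz
      obtain ⟨L, hL⟩ := cauchySeq_tendsto_of_complete
        (hc.cauchySeq (Metric.mem_ball_self hr))
      exact ⟨L, fun _ => hL⟩
    · exact ⟨0, fun h => absurd h hz⟩
  choose g' hg' using hex
  have hlu : TendstoLocallyUniformlyOn (fun k z => fderiv ℂ (F k) z) g' atTop V := by
    intro u hu x hx
    obtain ⟨r, hr, hrV, hc⟩ := hloc x hx
    have := hc.tendstoUniformlyOn_of_tendsto (f := g') (fun z hz => hg' z (hrV hz))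
    exact ⟨Metric.ball x r, mem_nhdsWithin_of_mem_nhds (Metric.ball_mem_nhds x hr), this u hu⟩
  have hd : ∀ x ∈ V, HasFDerivAt f (g' x) x := fun x hx =>
    hasFDerivAt_of_tendsto_locally_uniformly_on' hV hlu hF
      (fun y hy => h.tendsto_at hy) hx
  refine ⟨fun x hx => (hd x hx).differentiableAt.differentiableWithinAt, ?_⟩
  exact hlu.congr_right (fun x hx => (hd x hx).fderiv.symm)

lemma pd_tendsto {F : ℕ → (Fin n → ℂ) → ℂ} {f : (Fin n → ℂ) → ℂ} {V : Set (Fin n → ℂ)}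
    (hV : IsOpen V) (hF : ∀ k, DifferentiableOn ℂ (F k) V)
    (h : TendstoLocallyUniformlyOn F f atTop V) (i : Fin n) :
    TendstoLocallyUniformlyOn (fun k => pd i (F k)) (pd i f) atTop V := by
  have := (weierstrass hV hF h).2
  exact ((ContinuousLinearMap.apply ℂ ℂ (Pi.single i (1:ℂ) : Fin n → ℂ)).uniformContinuous).comp_tendstoLocallyUniformlyOn this

lemma pd_differentiableOn {f : (Fin n → ℂ) → ℂ} {V : Set (Fin n → ℂ)}
    (hV : IsOpen V) (hf : DifferentiableOn ℂ f V) (i : Fin n) :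
    DifferentiableOn ℂ (pd i f) V := by
  intro x hx
  suffices DifferentiableAt ℂ (pd i f) x from this.differentiableWithinAt
  obtain ⟨R', hR', hRV⟩ := Metric.isOpen_iff.1 hV x hx
  obtain ⟨R, hR, hRe⟩ : ∃ R > 0, R' = 4 * R := ⟨R'/4, by positivity, by ring⟩
  subst hRe
  have hsub : Metric.closedBall x (2*R) ⊆ V :=
    (Metric.closedBall_subset_ball (by linarith)).trans hRV
  obtain ⟨M, hM⟩ := (isCompact_closedBall x (2*R)).exists_bound_of_continuousOn
    (hf.continuousOn.mono hsub)
  have hM0 : 0 ≤ M := (norm_nonneg _).trans (hM x (Metric.mem_closedBall_self (by positivity)))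
  obtain ⟨k0, hk0⟩ := exists_nat_one_div_lt hR
  let e : Fin n → ℂ := Pi.single i 1
  have he : ‖e‖ = 1 := by simp [e, Pi.norm_single]
  let t : ℕ → ℝ := fun k => 1 / ((k + k0 : ℕ) + 1)
  have ht0 : ∀ k, 0 < t k := fun k => by positivity
  have htR : ∀ k, t k < R := fun k => by
    refine lt_of_le_of_lt ?_ hk0
    apply one_div_le_one_div_of_le (by positivity)
    push_cast; linarith [(Nat.cast_nonneg k : (0:ℝ) ≤ k)]
  have htt : Tendsto t atTop (𝓝 0) :=
    (tendsto_one_div_add_atTop_nhds_zero_nat (𝕜 := ℝ)).comp (tendsto_add_atTop_nat k0)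
  let q : ℕ → (Fin n → ℂ) → ℂ := fun k z => ((t k : ℂ))⁻¹ * (f (z + (t k : ℂ) • e) - f z)
  have hte : ∀ k, ‖(t k : ℂ) • e‖ = t k := fun k => by
    rw [norm_smul, he, mul_one, Complex.norm_real, Real.norm_of_nonneg (ht0 k).le]
  have hqd : ∀ k, DifferentiableOn ℂ (q k) (Metric.ball x R) := by
    intro k
    have h1 : DifferentiableOn ℂ (fun z => f (z + (t k : ℂ) • e)) (Metric.ball x R) := by
      refine hf.comp (by fun_prop) ?_
      intro z hz
      apply hsub
      rw [Metric.mem_closedBall, dist_eq_norm]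
      rw [Metric.mem_ball, dist_eq_norm] at hz
      have := norm_add_le (z - x) ((t k : ℂ) • e)
      rw [hte] at this
      have h2 := htR k
      rw [show z + (t k : ℂ) • e - x = z - x + (t k : ℂ) • e by abel]
      linarith
    exact (h1.sub (hf.mono ((Metric.ball_subset_closedBall.trans
      (Metric.closedBall_subset_closedBall (by linarith))).trans hsub))).const_mul _
  have hbd : ∀ k, ∀ z ∈ Metric.ball x R, ‖q k z - pd i f z‖ ≤ 4 * M / R^2 * t k := by
    intro k z hz
    have hzs : Metric.ball z R ⊆ Metric.closedBall x (2*R) := by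
      intro w hw
      rw [Metric.mem_closedBall]
      have := dist_triangle w z x
      have h1 := Metric.mem_ball.1 hw
      have h2 := Metric.mem_ball.1 hz
      linarith
    have := second_order (f := f) (c := z) (R := R) (M := M) hR (hf.mono (hzs.trans hsub))
      (fun w hw => hM w (hzs hw)) (h := (t k : ℂ) • e) (by rw [hte]; exact htR k)
    rw [hte, map_smul] at this
    have htk : (t k : ℂ) ≠ 0 := by exact_mod_cast (ht0 k).ne'
    have heq : q k z - pd i f z = (t k : ℂ)⁻¹ *
        (f (z + (t k : ℂ) • e) - f z - (t k : ℂ) • fderiv ℂ f z e) := by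
      simp only [q, pd, smul_eq_mul, e]
      field_simp
    rw [heq, norm_mul, norm_inv, Complex.norm_real, Real.norm_of_nonneg (ht0 k).le]
    have htk' := ht0 k
    calc (t k)⁻¹ * _ ≤ (t k)⁻¹ * (4 * M * (t k / R) ^ 2) := by gcongr
      _ = 4 * M / R^2 * t k := by field_simp
  have hlim : TendstoUniformlyOn q (pd i f) atTop (Metric.ball x R) := by
    rw [Metric.tendstoUniformlyOn_iff]
    intro ε hε
    have : Tendsto (fun k => 4 * M / R^2 * t k) atTop (𝓝 0) := by
      simpa using htt.const_mul (4 * M / R^2)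
    filter_upwards [this.eventually_lt_const hε] with k hk z hz
    rw [dist_comm, dist_eq_norm]
    exact (hbd k z hz).trans_lt hk
  exact ((weierstrass Metric.isOpen_ball hqd hlim.tendstoLocallyUniformlyOn).1 x
    (Metric.mem_ball_self hR)).differentiableAt (Metric.ball_mem_nhds x hR)

lemma pd_induct {Pr : ((Fin n → ℂ) → ℂ) → Prop} (hpd : ∀ i g, Pr g → Pr (pd i g)) (ℓ : Fin n → ℕ)
    {f : (Fin n → ℂ) → ℂ} (hf : Pr f) : Pr (Dml ℓ f) := by
  unfold Dml
  induction List.finRange n with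
  | nil => exact hf
  | cons i l ih =>
    simp only [List.foldr_cons]
    generalize ℓ i = m
    induction m with
    | zero => exact ih
    | succ m ihm => rw [Function.iterate_succ_apply']; exact hpd i _ ihm

lemma pd_induct2 {α β : Type*} {Pr : (α → (Fin n → ℂ) → ℂ) → (β → (Fin n → ℂ) → ℂ) → Prop}
    (hpd : ∀ i g g', Pr g g' → Pr (fun a => pd i (g a)) (fun a => pd i (g' a))) (ℓ : Fin n → ℕ)
    {f : α → (Fin n → ℂ) → ℂ} {f' : β → (Fin n → ℂ) → ℂ} (hf : Pr f f') :
    Pr (fun a => Dml ℓ (f a)) (fun a => Dml ℓ (f' a)) := by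
  unfold Dml
  induction List.finRange n with
  | nil => exact hf
  | cons i l ih =>
    simp only [List.foldr_cons]
    generalize ℓ i = m
    induction m with
    | zero => exact ih
    | succ m ihm =>
      simp only [Function.iterate_succ_apply']
      exact hpd i _ _ ihm

lemma Dml_differentiableOn {f : (Fin n → ℂ) → ℂ} {V : Set (Fin n → ℂ)}
    (hV : IsOpen V) (hf : DifferentiableOn ℂ f V) (ℓ : Fin n → ℕ) :
    DifferentiableOn ℂ (Dml ℓ f) V :=
  pd_induct (Pr := fun g => DifferentiableOn ℂ g V) (fun i _ hg => pd_differentiableOn hV hg i) ℓ hf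

lemma Dml_tendsto {F : ℕ → (Fin n → ℂ) → ℂ} {f : (Fin n → ℂ) → ℂ} {V : Set (Fin n → ℂ)}
    (hV : IsOpen V) (hF : ∀ k, DifferentiableOn ℂ (F k) V)
    (h : TendstoLocallyUniformlyOn F f atTop V) (ℓ : Fin n → ℕ) :
    TendstoLocallyUniformlyOn (fun k => Dml ℓ (F k)) (Dml ℓ f) atTop V :=
  (pd_induct2 (α := ℕ) (β := Unit) (Pr := fun g g' => (∀ k, DifferentiableOn ℂ (g k) V) ∧
    TendstoLocallyUniformlyOn g (g' ()) atTop V)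
    (fun i g g' hg => ⟨fun k => pd_differentiableOn hV (hg.1 k) i, pd_tendsto hV hg.1 hg.2 i⟩) ℓ
    (f := F) (f' := fun _ => f) ⟨hF, h⟩).2

lemma pd_congr {f g : (Fin n → ℂ) → ℂ} {V : Set (Fin n → ℂ)} (hV : IsOpen V)
    (h : EqOn f g V) (i : Fin n) : EqOn (pd i f) (pd i g) V := by
  intro z hz
  have : f =ᶠ[𝓝 z] g := by filter_upwards [hV.mem_nhds hz] with w hw using h hw
  simp only [pd, this.fderiv_eq]

lemma Dml_congr {f g : (Fin n → ℂ) → ℂ} {V : Set (Fin n → ℂ)} (hV : IsOpen V)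
    (h : EqOn f g V) (ℓ : Fin n → ℕ) : EqOn (Dml ℓ f) (Dml ℓ g) V :=
  pd_induct2 (α := Unit) (β := Unit) (Pr := fun g g' => EqOn (g ()) (g' ()) V)
    (fun i _ _ hg => pd_congr hV hg i) ℓ (f := fun _ => f) (f' := fun _ => g) h

/-- Affine substitution: `D^ℓ (f(a + t z)) = t^m (D^ℓ f)(a + t z)`, with `m` independent of `a, t`. -/
lemma Dml_affine (f : (Fin n → ℂ) → ℂ) (ℓ : Fin n → ℕ) :
    ∃ m : ℕ, ∀ (a : Fin n → ℂ) (t : ℂ),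
      Dml ℓ (fun z => f (a + t • z)) = fun z => t ^ m * Dml ℓ f (a + t • z) := by
  have := pd_induct2 (α := (Fin n → ℂ) × ℂ) (β := Unit)
    (Pr := fun g g' => ∃ m : ℕ, ∀ p : (Fin n → ℂ) × ℂ,
      g p = fun z => p.2 ^ m * g' () (p.1 + p.2 • z)) ?_ ℓ
    (f := fun p => fun z => f (p.1 + p.2 • z)) (f' := fun _ => f) ⟨0, by simp⟩
  · obtain ⟨m, hm⟩ := this
    exact ⟨m, fun a t => hm (a, t)⟩
  rintro i g g' ⟨m, hm⟩
  refine ⟨m + 1, ?_⟩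
  rintro ⟨a, t⟩
  simp only
  rw [hm]
  ext z
  simp only [pd]
  have h1 : (fun z => t ^ m * g' () (a + t • z)) = t ^ m • (fun z => g' () (a + t • z)) := by
    ext; simp
  have h2 : fderiv ℂ (fun z => g' () (a + t • z)) z = t • fderiv ℂ (g' ()) (a + t • z) := by
    have := fderiv_comp_smul (𝕜 := ℂ) (f := fun w => g' () (a + w)) (x := z) t
    rw [this, fderiv_comp_add_left]
  rw [h1, fderiv_const_smul_field, Pi.smul_apply, h2]
  simp [pow_succ, mul_assoc]


end

section
variable {n : ℕ}

lemma mvEval_hasFDerivAt (p : MvPolynomial (Fin n) ℂ) : ∀ z,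
    HasFDerivAt (mvEval p) (∑ i, mvEval (MvPolynomial.pderiv i p) z •
      (ContinuousLinearMap.proj i : (Fin n → ℂ) →L[ℂ] ℂ)) z := by
  induction p using MvPolynomial.induction_on with
  | C a =>
    intro z
    have : mvEval (MvPolynomial.C a : MvPolynomial (Fin n) ℂ) = fun _ => a := by
      ext; simp [mvEval]
    rw [this]
    refine (hasFDerivAt_const a z).congr_fderiv (ContinuousLinearMap.ext fun v => ?_)
    rw [ContinuousLinearMap.sum_apply]
    symm
    refine Finset.sum_eq_zero fun i _ => ?_
    change mvEval _ z * v i = 0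
    simp [mvEval]
  | add p q hp hq =>
    intro z
    have : mvEval (p + q) = mvEval p + mvEval q := by ext; simp [mvEval]
    rw [this]
    refine ((hp z).add (hq z)).congr_fderiv (ContinuousLinearMap.ext fun v => ?_)
    rw [ContinuousLinearMap.add_apply, ContinuousLinearMap.sum_apply,
      ContinuousLinearMap.sum_apply, ContinuousLinearMap.sum_apply, ← Finset.sum_add_distrib]
    refine Finset.sum_congr rfl fun i _ => ?_
    change mvEval _ z * v i + mvEval _ z * v i = mvEval _ z * v i
    simp [mvEval, add_mul]
  | mul_X p j hp =>
    intro z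
    have : mvEval (p * MvPolynomial.X j) = fun z => mvEval p z * z j := by ext; simp [mvEval]
    rw [this]
    refine ((hp z).mul (hasFDerivAt_apply (𝕜 := ℂ) j z)).congr_fderiv
      (ContinuousLinearMap.ext fun v => ?_)
    rw [ContinuousLinearMap.add_apply, ContinuousLinearMap.smul_apply,
      ContinuousLinearMap.smul_apply, ContinuousLinearMap.sum_apply,
      ContinuousLinearMap.sum_apply]
    change mvEval p z * v j + z j * ∑ i, mvEval _ z * v i = ∑ i, mvEval _ z * v i
    simp only [mvEval, MvPolynomial.pderiv_mul, map_add, map_mul, MvPolynomial.eval_X,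
      MvPolynomial.pderiv_X, add_mul, Finset.sum_add_distrib]
    rw [add_comm]
    congr 1
    · rw [Finset.mul_sum]
      refine Finset.sum_congr rfl fun i _ => ?_
      ring
    · rw [Finset.sum_eq_single j]
      · simp
      · intro b _ hb; simp [Pi.single_apply, hb.symm]
      · simp

lemma mvEval_differentiable (p : MvPolynomial (Fin n) ℂ) : Differentiable ℂ (mvEval p) :=
  fun z => (mvEval_hasFDerivAt p z).differentiableAt

lemma mvEval_continuous (p : MvPolynomial (Fin n) ℂ) : Continuous (mvEval p) :=
  (mvEval_differentiable p).continuous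

lemma pd_mvEval (p : MvPolynomial (Fin n) ℂ) (i : Fin n) :
    pd i (mvEval p) = mvEval (MvPolynomial.pderiv i p) := by
  ext z
  simp only [pd, (mvEval_hasFDerivAt p z).fderiv]
  simp [Pi.single_apply]

/-- polynomial version of `Dml` as a linear map -/
def dpoly (ℓ : Fin n → ℕ) (l : List (Fin n)) :
    MvPolynomial (Fin n) ℂ →ₗ[ℂ] MvPolynomial (Fin n) ℂ :=
  l.foldr (fun i g => ((MvPolynomial.pderiv i).toLinearMap ^ (ℓ i)) ∘ₗ g) LinearMap.id

lemma Dml_mvEval (ℓ : Fin n → ℕ) (p : MvPolynomial (Fin n) ℂ) :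
    Dml ℓ (mvEval p) = mvEval (dpoly ℓ (List.finRange n) p) := by
  unfold Dml
  induction List.finRange n with
  | nil => rfl
  | cons i l ih =>
    have h : dpoly ℓ (i :: l) p = ((MvPolynomial.pderiv i).toLinearMap ^ (ℓ i)) (dpoly ℓ l p) := rfl
    rw [h, List.foldr_cons, ih]
    generalize dpoly ℓ l p = q
    generalize ℓ i = m
    induction m with
    | zero => simp
    | succ m ihm => 
      rw [Function.iterate_succ_apply', ihm, pd_mvEval, pow_succ']
      rfl

/-- coefficients -/
lemma coeff_pderiv_pow (i : Fin n) (k : ℕ) (p : MvPolynomial (Fin n) ℂ) (m : Fin n →₀ ℕ) :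
    MvPolynomial.coeff m (((MvPolynomial.pderiv i).toLinearMap ^ k) p) =
      MvPolynomial.coeff (m + Finsupp.single i k) p * ((m i + 1).ascFactorial k : ℕ) := by
  induction k generalizing m with
  | zero => simp
  | succ k ih =>
    rw [pow_succ', Module.End.mul_apply]
    change MvPolynomial.coeff m (MvPolynomial.pderiv i _) = _
    rw [MvPolynomial.coeff_pderiv, ih, add_assoc, ← Finsupp.single_add, add_comm 1 k]
    simp only [Finsupp.add_apply, Finsupp.single_eq_same, Nat.ascFactorial_succ]
    have : (m i + 1 + 1).ascFactorial k * (m i + 1) = (m i + 1 + k) * (m i + 1).ascFactorial k := by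
      rw [mul_comm, ← Nat.succ_ascFactorial]
    rw [mul_assoc]
    congr 1
    exact_mod_cast this

lemma coeff_dpoly (ℓ : Fin n → ℕ) (l : List (Fin n)) (hl : l.Nodup)
    (p : MvPolynomial (Fin n) ℂ) (m : Fin n →₀ ℕ) :
    MvPolynomial.coeff m (dpoly ℓ l p) =
      MvPolynomial.coeff (m + (l.map fun i => Finsupp.single i (ℓ i)).sum) p *
        ((l.map fun i => (m i + 1).ascFactorial (ℓ i)).prod : ℕ) := by
  induction l generalizing m with
  | nil => simp [dpoly]
  | cons i l ih =>
    have hl' := List.nodup_cons.1 hl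
    have : dpoly ℓ (i :: l) p = ((MvPolynomial.pderiv i).toLinearMap ^ (ℓ i)) (dpoly ℓ l p) := rfl
    rw [this, coeff_pderiv_pow, ih hl'.2]
    simp only [List.map_cons, List.sum_cons, List.prod_cons, Nat.cast_mul]
    rw [add_assoc, mul_assoc, mul_comm (((List.map _ l).prod : ℕ) : ℂ)]
    congr 3
    congr 1
    apply List.map_congr_left
    intro j hj
    have : j ≠ i := fun h => hl'.1 (h ▸ hj)
    simp [Finsupp.single_apply, this.symm]

lemma coeff_dpoly' (ℓ : Fin n → ℕ) (p : MvPolynomial (Fin n) ℂ) (m : Fin n →₀ ℕ) :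
    MvPolynomial.coeff m (dpoly ℓ (List.finRange n) p) =
      MvPolynomial.coeff (m + Finsupp.equivFunOnFinite.symm ℓ) p *
        ((∏ i, (m i + 1).ascFactorial (ℓ i) : ℕ) : ℂ) := by
  rw [coeff_dpoly _ _ (List.nodup_finRange n)]
  have h1 : ((List.finRange n).map fun i => Finsupp.single i (ℓ i)).sum =
      Finsupp.equivFunOnFinite.symm ℓ := by
    have := List.sum_ofFn (f := fun i : Fin n => Finsupp.single i (ℓ i))
    rw [List.ofFn_eq_map] at this
    rw [this]
    ext j
    simp [Finsupp.finsetSum_apply, Finsupp.single_apply]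
  have h2 : ((List.finRange n).map fun i => (m i + 1).ascFactorial (ℓ i)).prod =
      ∏ i, (m i + 1).ascFactorial (ℓ i) := by
    rw [← List.ofFn_eq_map, List.prod_ofFn]
  rw [h1, h2]

lemma eval_zero_dpoly (ℓ : Fin n → ℕ) (p : MvPolynomial (Fin n) ℂ) :
    mvEval (dpoly ℓ (List.finRange n) p) 0 =
      MvPolynomial.coeff (Finsupp.equivFunOnFinite.symm ℓ) p *
        ((∏ i, (ℓ i).factorial : ℕ) : ℂ) := by
  have := coeff_dpoly' ℓ p 0
  simp only [zero_add, Finsupp.coe_zero, Pi.zero_apply, Nat.one_ascFactorial] at this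
  rw [← this, mvEval, ← MvPolynomial.constantCoeff_eq, ← MvPolynomial.eval_zero']
  rfl

lemma dpoly_finite (p : MvPolynomial (Fin n) ℂ) :
    {ℓ : Fin n → ℕ | dpoly ℓ (List.finRange n) p ≠ 0}.Finite := by
  have : {ℓ : Fin n → ℕ | dpoly ℓ (List.finRange n) p ≠ 0} ⊆
      ⋃ s ∈ p.support, {ℓ : Fin n → ℕ | ℓ ≤ ⇑s} := by
    intro ℓ hℓ
    obtain ⟨m, hm⟩ := MvPolynomial.ne_zero_iff.1 hℓ
    rw [coeff_dpoly'] at hm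
    have := left_ne_zero_of_mul hm
    simp only [mem_iUnion]
    refine ⟨_, MvPolynomial.mem_support_iff.2 this, ?_⟩
    intro i
    simp
  refine Set.Finite.subset ?_ this
  refine Set.Finite.biUnion (Finset.finite_toSet _) fun s _ => ?_
  exact Set.finite_Iic _

/-- translation -/
lemma Dml_translate (f : (Fin n → ℂ) → ℂ) (ℓ : Fin n → ℕ) (ζ : Fin n → ℂ) :
    Dml ℓ (fun z => f (ζ + z)) = fun z => Dml ℓ f (ζ + z) := by
  obtain ⟨m, hm⟩ := Dml_affine f ℓ
  simpa using hm ζ 1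

/-- the monomial polynomial -/
lemma pSumExt_eq (Nj : ℕ → Fin n → ℕ) (g : (Fin n → ℕ) → (Fin n → ℂ) → ℂ) (ζ : Fin n → ℂ)
    (lam : ℕ) : pSumExt Nj g ζ lam = fun z => mvEval (∑ j ∈ Finset.range (lam + 1),
      MvPolynomial.monomial (Finsupp.equivFunOnFinite.symm (Nj j))
        ((((∏ i, Nat.factorial (Nj j i) : ℕ) : ℂ))⁻¹ * g (Nj j) ζ)) (-ζ + z) := by
  ext z
  simp only [pSumExt, mvEval, map_sum]
  refine Finset.sum_congr rfl fun j _ => ?_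
  rw [MvPolynomial.eval_monomial, Finsupp.prod_fintype _ _ (by simp)]
  congr 1
  refine Finset.prod_congr rfl fun i _ => ?_
  simp only [Pi.add_apply, Pi.neg_apply, Finsupp.equivFunOnFinite_symm_apply_apply]
  congr 1; ring

lemma Dml_pSumExt (Nj : ℕ → Fin n → ℕ) (g : (Fin n → ℕ) → (Fin n → ℂ) → ℂ) (ζ : Fin n → ℂ)
    (lam : ℕ) (ℓ : Fin n → ℕ) (z : Fin n → ℂ) :
    Dml ℓ (pSumExt Nj g ζ lam) z = ∑ j ∈ Finset.range (lam + 1),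
      ((((∏ i, Nat.factorial (Nj j i) : ℕ) : ℂ))⁻¹ * g (Nj j) ζ) *
      mvEval (dpoly ℓ (List.finRange n)
        (MvPolynomial.monomial (Finsupp.equivFunOnFinite.symm (Nj j)) 1)) (z - ζ) := by
  rw [pSumExt_eq, Dml_translate, Dml_mvEval, map_sum]
  simp only [mvEval, map_sum, neg_add_eq_sub]
  refine Finset.sum_congr rfl fun j _ => ?_
  generalize ((((∏ i, Nat.factorial (Nj j i) : ℕ) : ℂ))⁻¹ * g (Nj j) ζ) = a
  rw [show (MvPolynomial.monomial (Finsupp.equivFunOnFinite.symm (Nj j)) a :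
    MvPolynomial (Fin n) ℂ) = a • MvPolynomial.monomial (Finsupp.equivFunOnFinite.symm (Nj j)) 1 by
      rw [MvPolynomial.smul_monomial, smul_eq_mul, mul_one], map_smul, MvPolynomial.smul_eval]

/-- Taylor formula for polynomials -/
lemma taylor_poly (Nj : ℕ → Fin n → ℕ) (hNj : Function.Bijective Nj)
    (Q : MvPolynomial (Fin n) ℂ) : ∃ N0, ∀ lam ≥ N0, ∀ ζ,
      pSumExt Nj (fun ℓ => Dml ℓ (mvEval Q)) ζ lam = mvEval Q := by
  have hfin := dpoly_finite Q
  obtain ⟨N0, hN0⟩ : ∃ N0, ∀ ℓ, dpoly ℓ (List.finRange n) Q ≠ 0 → ∃ j ≤ N0, Nj j = ℓ := by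
    have h2 : (Nj ⁻¹' {ℓ : Fin n → ℕ | dpoly ℓ (List.finRange n) Q ≠ 0}).Finite :=
      hfin.preimage hNj.1.injOn
    obtain ⟨N0, hN0⟩ := h2.bddAbove
    refine ⟨N0, fun ℓ hℓ => ?_⟩
    obtain ⟨j, rfl⟩ := hNj.2 ℓ
    exact ⟨j, hN0 hℓ, rfl⟩
  refine ⟨N0, fun lam hlam ζ => ?_⟩
  -- translated polynomial
  let T : MvPolynomial (Fin n) ℂ :=
    MvPolynomial.bind₁ (fun i => MvPolynomial.C (ζ i) + MvPolynomial.X i) Q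
  have hT : mvEval T = fun z => mvEval Q (ζ + z) := by
    ext z
    simp only [mvEval, T]
    rw [← MvPolynomial.aeval_eq_eval, MvPolynomial.aeval_bind₁, ← MvPolynomial.aeval_eq_eval]
    congr 2
    ext i; simp [MvPolynomial.aeval_eq_eval]
  have hc : ∀ ℓ : Fin n → ℕ, Dml ℓ (mvEval Q) ζ =
      MvPolynomial.coeff (Finsupp.equivFunOnFinite.symm ℓ) T *
        ((∏ i, (ℓ i).factorial : ℕ) : ℂ) := by
    intro ℓ
    rw [← eval_zero_dpoly, ← Dml_mvEval, hT, Dml_translate]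
    simp only [add_zero]
  have hpos : ∀ ℓ : Fin n → ℕ, ((∏ i, (ℓ i).factorial : ℕ) : ℂ) ≠ 0 := fun ℓ => by
    exact_mod_cast (Finset.prod_pos fun i _ => Nat.factorial_pos _).ne'
  rw [pSumExt_eq]
  have hTT : (∑ j ∈ Finset.range (lam + 1),
      MvPolynomial.monomial (Finsupp.equivFunOnFinite.symm (Nj j))
        ((((∏ i, Nat.factorial (Nj j i) : ℕ) : ℂ))⁻¹ * Dml (Nj j) (mvEval Q) ζ)) = T := by
    ext m
    rw [MvPolynomial.coeff_sum]
    obtain ⟨j, hj⟩ := hNj.2 (Finsupp.equivFunOnFinite m)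
    have hj' : Finsupp.equivFunOnFinite.symm (Nj j) = m := by rw [hj]; simp
    have hterm : ∀ k, MvPolynomial.coeff m (MvPolynomial.monomial
        (Finsupp.equivFunOnFinite.symm (Nj k))
        ((((∏ i, Nat.factorial (Nj k i) : ℕ) : ℂ))⁻¹ * Dml (Nj k) (mvEval Q) ζ)) =
        if k = j then MvPolynomial.coeff m T else 0 := by
      intro k
      rw [MvPolynomial.coeff_monomial]
      by_cases hk : k = j
      · subst hk
        rw [if_pos hj', if_pos rfl, hc, hj']
        have := hpos (Nj k)
        field_simp
      · rw [if_neg hk, if_neg]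
        intro h
        apply hk
        apply hNj.1
        apply Finsupp.equivFunOnFinite.symm.injective
        rw [h, hj']
    rw [Finset.sum_congr rfl fun k _ => hterm k, Finset.sum_ite_eq']
    split_ifs with h
    · rfl
    · by_contra hne
      have hd : dpoly (Nj j) (List.finRange n) Q ≠ 0 := by
        intro h0
        have h3 := hc (Nj j)
        rw [Dml_mvEval, h0, hj'] at h3
        simp only [mvEval, map_zero] at h3
        rcases mul_eq_zero.1 h3.symm with h4 | h4
        · exact hne h4.symm
        · exact hpos _ h4
      obtain ⟨j', hj'N, hjj⟩ := hN0 _ hd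
      rw [hNj.1 hjj] at hj'N
      exact h (Finset.mem_range.2 (by omega))
  ext z
  rw [hTT, hT]
  simp


end

section
variable {n : ℕ}

/-- a family of functions closed under derivatives and vanishing at `0` vanishes on a
connected set. -/
lemma family_zero (O C : Set ℂ) (hO : IsOpen O) (hC : IsPreconnected C) (hCO : C ⊆ O)
    (h0 : (0:ℂ) ∈ C) (𝒢 : Set (ℂ → ℂ)) (hz : ∀ F ∈ 𝒢, F 0 = 0)
    (hd : ∀ F ∈ 𝒢, ∃ F' ∈ 𝒢, ∀ s ∈ O, HasDerivAt F (F' s) s) :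
    ∀ F ∈ 𝒢, ∀ s ∈ C, F s = 0 := by
  have hit : ∀ k, ∀ F ∈ 𝒢, iteratedDeriv k F 0 = 0 := by
    intro k
    induction k with
    | zero => intro F hF; simpa using hz F hF
    | succ k ih =>
      intro F hF
      obtain ⟨F', hF', hd'⟩ := hd F hF
      rw [iteratedDeriv_succ']
      have : deriv F =ᶠ[𝓝 0] F' := by
        filter_upwards [hO.mem_nhds (hCO h0)] with s hs using (hd' s hs).deriv
      rw [this.iteratedDeriv_eq]
      exact ih F' hF'
  intro F hF s hs
  obtain ⟨F', hF', hd'⟩ := hd F hF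
  have hdiff : DifferentiableOn ℂ F O := fun s hs => (hd' s hs).differentiableAt.differentiableWithinAt
  have han : AnalyticOnNhd ℂ F O := hdiff.analyticOnNhd hO
  obtain ⟨r, hr, hrO⟩ := Metric.isOpen_iff.1 hO 0 (hCO h0)
  have hnear : F =ᶠ[𝓝 0] 0 := by
    filter_upwards [Metric.ball_mem_nhds (0:ℂ) hr] with z hz
    have := Complex.hasSum_taylorSeries_on_ball (hdiff.mono hrO) hz
    simp only [hit _ F hF, smul_zero] at this
    exact this.unique hasSum_zero
  exact (han.mono hCO).eqOn_zero_of_preconnected_of_eventuallyEq_zero hC h0 hnear hs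

lemma mem_of_dual {E : Type*} [NormedAddCommGroup E] [NormedSpace ℂ E] (S : Submodule ℂ E)
    (x : E) (h : ∀ φ : E →L[ℂ] ℂ, (∀ y ∈ S, φ y = 0) → φ x = 0) : x ∈ closure (S : Set E) := by
  by_contra hx
  letI : NormedSpace ℝ E := NormedSpace.restrictScalars ℝ ℂ E
  have hcv : Convex ℝ (closure (S : Set E)) := (S.restrictScalars ℝ).convex.closure
  obtain ⟨φ, u, h1, h2⟩ := RCLike.geometric_hahn_banach_point_closed (𝕜 := ℂ) hcv isClosed_closure hx
  have hS : ∀ y ∈ S, φ y = 0 := by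
    intro y hy
    by_contra hne
    have h3 := h2 ((((u - 1 : ℝ) : ℂ) * (φ y)⁻¹) • y)  (subset_closure (S.smul_mem _ hy))
    rw [map_smul, smul_eq_mul, mul_assoc, inv_mul_cancel₀ hne, mul_one] at h3
    simp at h3
    linarith
  have h3 := h2 0 (subset_closure S.zero_mem)
  rw [h φ hS] at h1
  simp at h1 h3
  linarith

/-- restriction of a function to `C(L, ℂ)` (junk `0` if not continuous). -/
def toC (L : Set (Fin n → ℂ)) (f : (Fin n → ℂ) → ℂ) : C(L, ℂ) :=
  open Classical in if h : ContinuousOn f L then ⟨L.domRestrict f, h.domRestrict⟩ else 0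

lemma toC_apply {L : Set (Fin n → ℂ)} {f : (Fin n → ℂ) → ℂ} (h : ContinuousOn f L) (z : L) :
    toC L f z = f z := by
  rw [toC, dif_pos h]; rfl

set_option maxHeartbeats 400000 in
lemma G_hasDeriv {V L : Set (Fin n → ℂ)} (hV : IsOpen V) (hL : IsCompact L) [CompactSpace L]
    {h : (Fin n → ℂ) → ℂ} (hh : DifferentiableOn ℂ h V) (z0 : Fin n → ℂ) (s : ℂ)
    (hs : ∀ z ∈ L, z0 + s • (z - z0) ∈ V) :
    HasDerivAt (fun s : ℂ => toC L fun z => h (z0 + s • (z - z0)))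
      (∑ i, toC L (fun z => z i - z0 i) * toC L (fun z => pd i h (z0 + s • (z - z0)))) s := by
  have hcont : ∀ t : ℂ, Continuous fun z : Fin n → ℂ => z0 + t • (z - z0) := fun t => by fun_prop
  have hKc : IsCompact ((fun z => z0 + s • (z - z0)) '' L) := hL.image (hcont s)
  have hKV : ((fun z => z0 + s • (z - z0)) '' L) ⊆ V := by
    rintro _ ⟨z, hz, rfl⟩; exact hs z hz
  obtain ⟨R, hR, hRV⟩ := hKc.exists_cthickening_subset_open hV hKV
  have hcc : IsCompact (Metric.cthickening R ((fun z => z0 + s • (z - z0)) '' L)) := hKc.cthickening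
  obtain ⟨M', hM'⟩ := hcc.exists_bound_of_continuousOn (hh.continuousOn.mono hRV)
  obtain ⟨M, hM, hM0⟩ : ∃ M, (∀ z ∈ Metric.cthickening R ((fun z => z0 + s • (z - z0)) '' L),
      ‖h z‖ ≤ M) ∧ 0 ≤ M :=
    ⟨max M' 1, fun z hz => (hM' z hz).trans (le_max_left _ _), by positivity⟩
  obtain ⟨B', hB'⟩ := hL.exists_bound_of_continuousOn (f := fun z => z - z0) (by fun_prop)
  obtain ⟨B, hB, hB0⟩ : ∃ B, (∀ z ∈ L, ‖z - z0‖ ≤ B) ∧ 0 < B :=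
    ⟨max B' 1, fun z hz => (hB' z hz).trans (le_max_left _ _), by positivity⟩
  have himg : ∀ z ∈ L, z0 + s • (z - z0) ∈ ((fun z => z0 + s • (z - z0)) '' L) :=
    fun z hz => ⟨z, hz, rfl⟩
  have hball : ∀ z ∈ L, Metric.ball (z0 + s • (z - z0)) R ⊆
      Metric.cthickening R ((fun z => z0 + s • (z - z0)) '' L) := fun z hz =>
    Metric.ball_subset_closedBall.trans
      (Metric.closedBall_subset_cthickening (himg z hz) R)
  have hcO : ∀ (g : (Fin n → ℂ) → ℂ), ContinuousOn g V → ∀ t : ℂ,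
      (∀ z ∈ L, z0 + t • (z - z0) ∈ V) → ContinuousOn (fun z => g (z0 + t • (z - z0))) L :=
    fun g hg t ht => ContinuousOn.comp (t := V) hg (hcont t).continuousOn ht
  rw [hasDerivAt_iff_isLittleO_nhds_zero]
  refine (Asymptotics.IsBigO.of_bound (4 * M * (B / R) ^ 2) ?_).trans_isLittleO
    (Asymptotics.isLittleO_pow_id (𝕜 := ℂ) (n := 2) (by norm_num))
  filter_upwards [Metric.ball_mem_nhds (0:ℂ) (show 0 < R / B by positivity)] with δ hδ
  have hδ' : ‖δ‖ * B < R := by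
    rw [mem_ball_zero_iff, lt_div_iff₀ hB0] at hδ; exact hδ
  have hsmall : ∀ z ∈ L, ‖δ • (z - z0)‖ ≤ ‖δ‖ * B := fun z hz => by
    rw [norm_smul]; exact mul_le_mul_of_nonneg_left (hB z hz) (norm_nonneg _)
  have heq : ∀ z, z0 + (s + δ) • (z - z0) = (z0 + s • (z - z0)) + δ • (z - z0) := fun z => by
    rw [add_smul, add_assoc]
  have hsδ : ∀ z ∈ L, z0 + (s + δ) • (z - z0) ∈ V := fun z hz => by
    rw [heq]
    apply hRV
    apply hball z hz
    rw [mem_ball_iff_norm, add_sub_cancel_left]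
    exact (hsmall z hz).trans_lt hδ'
  rw [ContinuousMap.norm_le _ (by positivity)]
  rintro ⟨z, hz⟩
  simp only [ContinuousMap.sub_apply, ContinuousMap.smul_apply, ContinuousMap.coe_sum,
    Finset.sum_apply, ContinuousMap.mul_apply]
  rw [toC_apply (hcO h hh.continuousOn _ hsδ), toC_apply (hcO h hh.continuousOn _ hs)]
  have h5 : ∀ i, toC L (fun z => pd i h (z0 + s • (z - z0))) ⟨z, hz⟩ = pd i h (z0 + s • (z - z0)) :=
    fun i => toC_apply (hcO _ (pd_differentiableOn hV hh i).continuousOn _ hs) _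
  have h6 : ∀ i, toC L (fun z => z i - z0 i) ⟨z, hz⟩ = z i - z0 i :=
    fun i => toC_apply (by fun_prop) _
  simp only [h5, h6]
  have h7 := second_order hR (hh.mono ((hball z hz).trans hRV)) (fun w hw => hM w (hball z hz hw))
    ((hsmall z hz).trans_lt hδ')
  rw [heq]
  have h8 : fderiv ℂ h (z0 + s • (z - z0)) (δ • (z - z0)) =
      δ • ∑ i, (z i - z0 i) * pd i h (z0 + s • (z - z0)) := by
    rw [map_smul]
    congr 1
    generalize z0 + s • (z - z0) = c
    conv_lhs => rw [show z - z0 = ∑ i, (z i - z0 i) • (Pi.single i (1:ℂ) : Fin n → ℂ) by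
      ext j; simp [Finset.sum_apply, Pi.single_apply]]
    rw [map_sum]
    refine Finset.sum_congr rfl fun i _ => ?_
    rw [map_smul]; rfl
  rw [h8] at h7
  refine h7.trans ?_
  rw [norm_pow]
  calc _ ≤ 4 * M * (‖δ‖ * B / R) ^ 2 := by
        gcongr
        exact hsmall z hz
    _ = _ := by ring

lemma runge_convex {V L : Set (Fin n → ℂ)} (hV : IsOpen V) (hL : IsCompact L) (z0 : Fin n → ℂ)
    (hseg : ∀ z ∈ L, ∀ s ∈ Icc (0:ℝ) 1, z0 + (s:ℂ) • (z - z0) ∈ V) 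
    {h : (Fin n → ℂ) → ℂ} (hh : DifferentiableOn ℂ h V) {ε : ℝ} (hε : 0 < ε) :
    ∃ Q : MvPolynomial (Fin n) ℂ, ∀ z ∈ L, ‖mvEval Q z - h z‖ < ε := by
  haveI : CompactSpace L := isCompact_iff_compactSpace.1 hL
  let ι : MvPolynomial (Fin n) ℂ →ₗ[ℂ] C(L, ℂ) :=
    { toFun := fun q => toC L (mvEval q)
      map_add' := fun p q => by
        ext z
        rw [ContinuousMap.add_apply, toC_apply (mvEval_continuous _).continuousOn,
          toC_apply (mvEval_continuous _).continuousOn, toC_apply (mvEval_continuous _).continuousOn]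
        simp [mvEval]
      map_smul' := fun c q => by
        ext z
        rw [ContinuousMap.smul_apply, toC_apply (mvEval_continuous _).continuousOn,
          toC_apply (mvEval_continuous _).continuousOn]
        simp [mvEval, MvPolynomial.smul_eval] }
  have hι : ∀ q z, ι q z = mvEval q z := fun q z => toC_apply (mvEval_continuous _).continuousOn z
  let G : ((Fin n → ℂ) → ℂ) → ℂ → C(L, ℂ) := fun h s => toC L fun z => h (z0 + s • (z - z0))
  have hself : ContinuousOn h L := hh.continuousOn.mono fun z hz => by
    simpa using hseg z hz 1 (by simp)
  have hmem : G h 1 ∈ closure (LinearMap.range ι : Set C(L, ℂ)) := by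
    apply mem_of_dual
    intro φ hφ
    let O : Set ℂ := {s | ∀ z ∈ L, z0 + s • (z - z0) ∈ V}
    have hO : IsOpen O := by
      rw [isOpen_iff_mem_nhds]
      intro s hs
      have := hL.eventually_forall_of_forall_eventually (x₀ := s)
        (P := fun s z => z0 + s • (z - z0) ∈ V) (fun z hz => by
          have hc : Continuous fun p : ℂ × (Fin n → ℂ) => z0 + p.1 • (p.2 - z0) := by fun_prop
          exact (hc.tendsto (s, z)).eventually (hV.mem_nhds (hs z hz)))
      exact this
    let C : Set ℂ := (fun s : ℝ => (s:ℂ)) '' Icc (0:ℝ) 1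
    have hC : IsPreconnected C := (isPreconnected_Icc).image _ (by fun_prop)
    have hCO : C ⊆ O := by
      rintro _ ⟨s, hs, rfl⟩ z hz
      exact hseg z hz s hs
    let gens : Set (ℂ → ℂ) := {F | ∃ q : MvPolynomial (Fin n) ℂ, ∃ g, DifferentiableOn ℂ g V ∧
      F = fun s => φ (ι q * G g s)}
    have key := family_zero O C hO hC hCO ⟨0, by simp⟩ (Submodule.span ℂ gens) ?_ ?_
      (fun s => φ (ι 1 * G h s)) (Submodule.subset_span ⟨1, h, hh, rfl⟩) 1 ⟨1, by simp⟩
    · have h1 : ι 1 = 1 := by ext z; rw [hι]; simp [mvEval]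
      simpa [h1] using key
    · intro F hF
      induction hF using Submodule.span_induction with
      | mem F hF =>
        obtain ⟨q, g, hg, rfl⟩ := hF
        refine hφ _ ⟨g z0 • q, ?_⟩
        rw [map_smul]
        ext z
        have : G g 0 z = g z0 := by
          have : G g 0 = toC L fun z => g z0 := by simp [G]
          rw [this]; exact toC_apply continuousOn_const z
        simp [this, mul_comm]
      | zero => rfl
      | add F G _ _ hF hG => simp [hF, hG]
      | smul c F _ hF => simp [hF]
    · intro F hF
      induction hF using Submodule.span_induction with
      | mem F hF =>
        obtain ⟨q, g, hg, rfl⟩ := hF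
        refine ⟨fun s => ∑ i, φ (ι (q * (MvPolynomial.X i - MvPolynomial.C (z0 i))) *
          G (pd i g) s), ?_, fun s hs => ?_⟩
        · have : (fun s => ∑ i, φ (ι (q * (MvPolynomial.X i - MvPolynomial.C (z0 i))) *
            G (pd i g) s)) = ∑ i, fun s => φ (ι (q * (MvPolynomial.X i - MvPolynomial.C (z0 i))) *
            G (pd i g) s) := by ext s; simp
          rw [this]
          exact Submodule.sum_mem _ fun i _ => Submodule.subset_span
            ⟨_, _, pd_differentiableOn hV hg i, rfl⟩
        · have h1 := G_hasDeriv hV hL hg z0 s hs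
          have h2 := (φ.hasFDerivAt (x := ι q * G g s)).comp_hasDerivAt s (h1.const_mul (ι q))
          refine h2.congr_deriv ?_
          rw [Finset.mul_sum, map_sum]
          refine Finset.sum_congr rfl fun i _ => ?_
          rw [← mul_assoc]
          congr 2
          ext z
          rw [ContinuousMap.mul_apply, hι, hι, toC_apply (by fun_prop)]
          simp [mvEval]
      | zero => exact ⟨0, Submodule.zero_mem _, fun s _ => hasDerivAt_const s 0⟩
      | add F G _ _ hF hG =>
        obtain ⟨F', hF', h1⟩ := hF
        obtain ⟨G', hG', h2⟩ := hG
        exact ⟨F' + G', Submodule.add_mem _ hF' hG', fun s hs => (h1 s hs).add (h2 s hs)⟩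
      | smul c F _ hF =>
        obtain ⟨F', hF', h1⟩ := hF
        exact ⟨c • F', Submodule.smul_mem _ c hF', fun s hs => (h1 s hs).const_smul c⟩
  obtain ⟨_, ⟨Q, rfl⟩, hQ⟩ := Metric.mem_closure_iff.1 hmem ε hε
  refine ⟨Q, fun z hz => ?_⟩
  rw [dist_comm, dist_eq_norm] at hQ
  have := (ContinuousMap.norm_coe_le_norm (ι Q - G h 1) ⟨z, hz⟩).trans_lt hQ
  rw [ContinuousMap.sub_apply, hι] at this
  have h2 : G h 1 ⟨z, hz⟩ = h z := by
    have : G h 1 = toC L h := by simp [G]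
    rw [this]; exact toC_apply hself _
  rwa [h2] at this


end

section
variable {n : ℕ}

lemma ratio_bound {a b : ℂ} {q : ℝ} (N : ℕ) (hb : b ≠ 0) (h : ‖a‖ ≤ q * ‖b‖) 
    (hq : q ^ N ≤ 1 / 2) {e : ℂ} (he : e * (b ^ N + a ^ N) = a ^ N) : ‖e‖ ≤ 2 * q ^ N := by
  have hb' : 0 < ‖b‖ := norm_pos_iff.2 hb
  have hq0 : 0 ≤ q := by
    by_contra hq
    have := (norm_nonneg a).trans h
    nlinarith
  have h1 : ‖a ^ N‖ ≤ q ^ N * ‖b ^ N‖ := by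
    rw [norm_pow, norm_pow, ← mul_pow]; gcongr
  have h2 : 0 < ‖b ^ N‖ := norm_pos_iff.2 (pow_ne_zero _ hb)
  have h3 : ‖b ^ N‖ / 2 ≤ ‖b ^ N + a ^ N‖ := by
    have := norm_sub_le_norm_add (b ^ N) (a ^ N)
    nlinarith
  have h4 : ‖e‖ * ‖b ^ N + a ^ N‖ = ‖a ^ N‖ := by rw [← norm_mul, he]
  have h5 : ‖e‖ * (‖b ^ N‖ / 2) ≤ q ^ N * ‖b ^ N‖ := by
    refine le_trans ?_ (h4.le.trans h1)
    gcongr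
  nlinarith

lemma norm_sq_pm (w : ℂ) : ‖w + 1‖ ^ 2 - ‖w - 1‖ ^ 2 = 4 * w.re := by
  rw [← Complex.normSq_eq_norm_sq, ← Complex.normSq_eq_norm_sq, Complex.normSq_apply,
    Complex.normSq_apply]
  simp; ring

lemma step_poly {L K : Set (Fin n → ℂ)} (hL : IsCompact L) (hLc : Convex ℝ L) (hK : IsCompact K)
    (hKc : Convex ℝ K) (hLK : Disjoint L K) {ε : ℝ} (hε : 0 < ε) :
    ∃ H : MvPolynomial (Fin n) ℂ, (∀ z ∈ L, ‖mvEval H z‖ < ε) ∧ (∀ z ∈ K, ‖mvEval H z - 1‖ < ε) := by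
  obtain ⟨φ, u, v, h1, h2, h3⟩ :=
    RCLike.geometric_hahn_banach_compact_closed (𝕜 := ℂ) hLc hL hKc hK.isClosed hLK
  let W : MvPolynomial (Fin n) ℂ := ∑ i, MvPolynomial.C (φ (Pi.single i 1)) * MvPolynomial.X i -
    MvPolynomial.C (((u + v) / 2 : ℝ) : ℂ)
  have hW : ∀ z, mvEval W z = φ z - (((u + v) / 2 : ℝ) : ℂ) := by
    intro z
    simp only [W, mvEval, map_sub, map_sum, map_mul, MvPolynomial.eval_C, MvPolynomial.eval_X]
    congr 1
    conv_rhs => rw [show z = ∑ i, (z i) • (Pi.single i (1:ℂ) : Fin n → ℂ) by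
      ext j; simp [Finset.sum_apply, Pi.single_apply]]
    rw [map_sum]
    refine Finset.sum_congr rfl fun i _ => ?_
    rw [map_smul, smul_eq_mul, mul_comm]
  have hWL : ∀ z ∈ L, (mvEval W z).re < 0 := by
    intro z hz
    have := h1 z hz
    rw [hW, Complex.sub_re, Complex.ofReal_re]
    simp at this
    linarith
  have hWK : ∀ z ∈ K, 0 < (mvEval W z).re := by
    intro z hz
    have := h3 z hz
    rw [hW, Complex.sub_re, Complex.ofReal_re]
    simp at this
    linarith
  clear_value W
  clear hW h1 h2 h3 u v φ
  rcases (L ∪ K).eq_empty_or_nonempty with hem | hne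
  · refine ⟨0, fun z hz => ?_, fun z hz => ?_⟩
    · have : z ∈ L ∪ K := Or.inl hz
      rw [hem] at this; exact this.elim
    · have : z ∈ L ∪ K := Or.inr hz
      rw [hem] at this; exact this.elim
  -- q
  have hcW := mvEval_continuous W
  obtain ⟨q, hq1, hqL, hqK⟩ : ∃ q < 1, (∀ z ∈ L, ‖mvEval W z + 1‖ ≤ q * ‖mvEval W z - 1‖) ∧
      (∀ z ∈ K, ‖mvEval W z - 1‖ ≤ q * ‖mvEval W z + 1‖) := by
    have aux : ∀ (X : Set (Fin n → ℂ)) (a b : (Fin n → ℂ) → ℝ), IsCompact X → Continuous a →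
        Continuous b → (∀ z ∈ X, 0 ≤ a z ∧ a z < b z) → ∃ q < 1, 0 ≤ q ∧ ∀ z ∈ X, a z ≤ q * b z := by
      intro X a b hX ha hb hab
      rcases X.eq_empty_or_nonempty with rfl | hXne
      · exact ⟨0, by norm_num, le_rfl, by simp⟩
      have hb0 : ∀ z ∈ X, 0 < b z := fun z hz => (hab z hz).1.trans_lt (hab z hz).2
      obtain ⟨x, hx, hmax⟩ := hX.exists_isMaxOn hXne
        (f := fun z => a z / b z) (ha.continuousOn.div hb.continuousOn fun z hz => (hb0 z hz).ne')
      refine ⟨a x / b x, (div_lt_one (hb0 x hx)).2 (hab x hx).2,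
        div_nonneg (hab x hx).1 (hb0 x hx).le, fun z hz => ?_⟩
      have := hmax hz
      exact (div_le_iff₀ (hb0 z hz)).1 this
    obtain ⟨q1, h1, h10, h1'⟩ := aux L (fun z => ‖mvEval W z + 1‖) (fun z => ‖mvEval W z - 1‖) hL
      (by fun_prop) (by fun_prop) (fun z hz => ⟨norm_nonneg _, by
        have := norm_sq_pm (mvEval W z)
        have h2 := hWL z hz
        exact lt_of_pow_lt_pow_left₀ 2 (norm_nonneg _) (by linarith)⟩)
    obtain ⟨q2, h2, h20, h2'⟩ := aux K (fun z => ‖mvEval W z - 1‖) (fun z => ‖mvEval W z + 1‖) hK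
      (by fun_prop) (by fun_prop) (fun z hz => ⟨norm_nonneg _, by
        have := norm_sq_pm (mvEval W z)
        have h2 := hWK z hz
        exact lt_of_pow_lt_pow_left₀ 2 (norm_nonneg _) (by linarith)⟩)
    refine ⟨max q1 q2, max_lt h1 h2, fun z hz => (h1' z hz).trans ?_, fun z hz => (h2' z hz).trans ?_⟩
    · gcongr; exact le_max_left _ _
    · gcongr; exact le_max_right _ _
  -- N
  obtain ⟨N, hN0, hNhalf, hNε⟩ : ∃ N : ℕ, N ≠ 0 ∧ q ^ N ≤ 1 / 2 ∧ 2 * q ^ N < ε / 2 := by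
    have hq0 : 0 ≤ q := by
      obtain ⟨z, hz | hz⟩ := hne
      · have h1 := hqL z hz
        by_contra hq
        have h2 := norm_sq_pm (mvEval W z)
        have h3 := hWL z hz
        have h4 := norm_nonneg (mvEval W z + 1)
        have h5 := norm_nonneg (mvEval W z - 1)
        have h6 : ‖mvEval W z - 1‖ = 0 := by nlinarith
        rw [h6] at h2; nlinarith
      · have h1 := hqK z hz
        by_contra hq
        have h2 := norm_sq_pm (mvEval W z)
        have h3 := hWK z hz
        have h4 := norm_nonneg (mvEval W z + 1)
        have h5 := norm_nonneg (mvEval W z - 1)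
        have h6 : ‖mvEval W z + 1‖ = 0 := by nlinarith
        rw [h6] at h2; nlinarith
    have ht := tendsto_pow_atTop_nhds_zero_of_lt_one hq0 hq1
    have h4 : ∀ᶠ N : ℕ in atTop, q ^ N < min (1/2) (ε / 4) :=
      ht.eventually_lt_const (by positivity)
    obtain ⟨N, hN, hN1⟩ := (h4.and (eventually_ge_atTop 1)).exists
    have := lt_min_iff.1 hN
    exact ⟨N, by omega, this.1.le, by linarith [this.2]⟩
  let X := L ∪ K
  have hX : IsCompact X := hL.union hK
  haveI : CompactSpace X := isCompact_iff_compactSpace.1 hX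
  haveI : Nonempty X := hne.to_subtype
  let ι : MvPolynomial (Fin n) ℂ →ₐ[ℂ] C(X, ℂ) :=
    MvPolynomial.aeval (fun i => (⟨fun z => z.1 i, (continuous_apply i).comp continuous_subtype_val⟩ : C(X, ℂ)))
  have hι : ∀ q z, ι q z = mvEval q z := by
    intro q z
    induction q using MvPolynomial.induction_on with
    | C a => simp [mvEval, ι]
    | add p q hp hq => rw [map_add, ContinuousMap.add_apply, hp, hq]; simp [mvEval]
    | mul_X p i hp => rw [map_mul, ContinuousMap.mul_apply, hp]; simp [mvEval, ι]
  clear_value ι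
  let S : Subalgebra ℂ C(X, ℂ) := ι.range.topologicalClosure
  haveI hS : IsClosed (S : Set C(X, ℂ)) := Subalgebra.isClosed_topologicalClosure _
  haveI : CompleteSpace S := hS.completeSpace_coe
  let x : S := ⟨ι W, Subalgebra.le_topologicalClosure _ ⟨W, rfl⟩⟩
  have hspec : ∀ k ∈ spectrum ℂ x, k.re ≠ 0 := by
    intro k hk hre
    have hb := Subalgebra.spectrum_isBounded_connectedComponentIn S x hk
    let I : Set ℂ := {z | z.re = 0}
    have hI : IsPreconnected I := by
      have : I = (fun t : ℝ => (t : ℂ) * Complex.I) '' univ := by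
        ext z; constructor
        · intro hz; refine ⟨z.im, trivial, ?_⟩
          apply Complex.ext <;> simp
          exact hz.symm
        · rintro ⟨t, -, rfl⟩; simp [I]
      rw [this]
      exact isPreconnected_univ.image _ (by fun_prop)
    have hsub : I ⊆ (spectrum ℂ (x : C(X, ℂ)))ᶜ := by
      rw [ContinuousMap.spectrum_eq_range]
      rintro _ hz ⟨⟨y, hy⟩, rfl⟩
      change (ι W ⟨y, hy⟩).re = 0 at hz
      rw [hι] at hz
      rcases hy with hy | hy
      · exact (hWL y hy).ne hz
      · exact (hWK y hy).ne' hz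
    have h5 := hb.subset (hI.subset_connectedComponentIn (x := k) hre hsub)
    obtain ⟨B, hB⟩ := h5.exists_norm_le
    have := hB (((|B| + 1 : ℝ) : ℂ) * Complex.I) (by simp [I])
    rw [norm_mul, Complex.norm_I, mul_one, Complex.norm_real, Real.norm_eq_abs] at this
    have h6 := le_abs_self (|B| + 1)
    have h7 := le_abs_self B
    linarith
  let p : Polynomial ℂ := (Polynomial.X + 1) ^ N + (Polynomial.X - 1) ^ N
  have hunit : IsUnit (Polynomial.aeval x p) := by
    by_contra hnu
    have h0 : (0:ℂ) ∈ spectrum ℂ (Polynomial.aeval x p) := spectrum.zero_mem_iff ℂ |>.2 hnu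
    rw [spectrum.map_polynomial_aeval] at h0
    obtain ⟨k, hk, hk0⟩ := h0
    apply hspec k hk
    simp only [p, Polynomial.eval_add, Polynomial.eval_pow, Polynomial.eval_X, Polynomial.eval_one,
      Polynomial.eval_sub] at hk0
    have h5 : ‖k + 1‖ ^ N = ‖k - 1‖ ^ N := by
      rw [← norm_pow, ← norm_pow, eq_neg_of_add_eq_zero_left hk0, norm_neg]
    have h6 := (pow_left_inj₀ (norm_nonneg _) (norm_nonneg _) hN0).1 h5
    have := norm_sq_pm k
    rw [h6] at this
    linarith
  obtain ⟨e', he'⟩ := hunit.exists_left_inv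
  let e : S := e' * (x + 1) ^ N
  have he : ∀ z : X, (e : C(X, ℂ)) z * ((mvEval W z + 1) ^ N + (mvEval W z - 1) ^ N) =
      (mvEval W z + 1) ^ N := by
    intro z
    have h5 : e * Polynomial.aeval x p = (x + 1) ^ N := by
      rw [show e * Polynomial.aeval x p = (e' * Polynomial.aeval x p) * (x + 1) ^ N by
        simp only [e]; ring, he', one_mul]
    have h6 := congrArg (fun s : S => (s : C(X, ℂ)) z) h5
    simpa [p, x, hι] using h6
  obtain ⟨_, ⟨H, rfl⟩, hH⟩ := Metric.mem_closure_iff.1 (e.2 : (e : C(X, ℂ)) ∈ closure _) (ε / 2)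
    (by positivity)
  have hHz : ∀ z : X, ‖mvEval H z - (e : C(X, ℂ)) z‖ < ε / 2 := by
    intro z
    rw [dist_comm, dist_eq_norm] at hH
    have := (ContinuousMap.norm_coe_le_norm (ι H - (e : C(X, ℂ))) z).trans_lt hH
    rwa [ContinuousMap.sub_apply, hι] at this
  refine ⟨H, fun z hz => ?_, fun z hz => ?_⟩
  · have h5 := hHz ⟨z, Or.inl hz⟩
    have h6 := he ⟨z, Or.inl hz⟩
    have h7 : mvEval W z - 1 ≠ 0 := by
      intro h0
      have := hWL z hz
      rw [sub_eq_zero.1 h0] at this; simp at this; linarith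
    have h8 := ratio_bound N h7 (hqL z hz) hNhalf (e := (e : C(X, ℂ)) ⟨z, Or.inl hz⟩)
      (by rw [add_comm]; exact h6)
    have h9 := norm_add_le (mvEval H z - (e : C(X, ℂ)) ⟨z, Or.inl hz⟩) ((e : C(X, ℂ)) ⟨z, Or.inl hz⟩)
    rw [sub_add_cancel] at h9
    simp only at h5
    linarith
  · have h5 := hHz ⟨z, Or.inr hz⟩
    have h6 := he ⟨z, Or.inr hz⟩
    simp only at h5 h6
    have h7 : mvEval W z + 1 ≠ 0 := by
      intro h0
      have := hWK z hz
      rw [eq_neg_of_add_eq_zero_left h0] at this; simp at this; linarith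
    have h8 := ratio_bound N h7 (hqK z hz) hNhalf (e := 1 - (e : C(X, ℂ)) ⟨z, Or.inr hz⟩)
      (by linear_combination -h6)
    have h9 := norm_sub_le (mvEval H z - (e : C(X, ℂ)) ⟨z, Or.inr hz⟩)
      (1 - (e : C(X, ℂ)) ⟨z, Or.inr hz⟩)
    rw [sub_sub_sub_cancel_right] at h9
    linarith


end

section
variable {n : ℕ}

lemma dilate_mem {Ω : Set (Fin n → ℂ)} (hΩo : IsOpen Ω) (hΩcv : Convex ℝ Ω) {z0 z : Fin n → ℂ}
    (h0 : z0 ∈ Ω) (hz : z ∈ closure Ω) {t : ℝ} (ht0 : 0 ≤ t) (ht : t < 1) :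
    z0 + (t : ℂ) • (z - z0) ∈ Ω := by
  have := hΩcv.add_smul_sub_mem_interior' hz (hΩo.interior_eq.symm ▸ h0) (t := 1 - t)
    ⟨by linarith, by linarith⟩
  rw [hΩo.interior_eq] at this
  convert this using 1
  ext i
  simp
  ring

lemma dilate_approx {Ω : Set (Fin n → ℂ)} (hΩo : IsOpen Ω) (hΩcv : Convex ℝ Ω) {z0 : Fin n → ℂ}
    (h0 : z0 ∈ Ω) (f : AinfSpace n Ω) {L : Set (Fin n → ℂ)} (hL : IsCompact L)
    (hLΩ : L ⊆ closure Ω) (J : Finset (Fin n → ℕ)) {ε : ℝ} (hε : 0 < ε) :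
    ∃ t : ℝ, 0 < t ∧ t < 1 ∧ ∀ ℓ ∈ J, ∀ z ∈ L,
      ‖Dml ℓ (fun z => f.1 (z0 + (t : ℂ) • (z - z0))) z - AinfExt f ℓ z‖ < ε := by
  have main : ∀ ℓ ∈ J, ∀ᶠ t : ℝ in 𝓝[<] 1, ∀ z ∈ L,
      ‖Dml ℓ (fun z => f.1 (z0 + (t : ℂ) • (z - z0))) z - AinfExt f ℓ z‖ < ε := by
    intro ℓ _
    obtain ⟨m, hm⟩ := Dml_affine f.1 ℓ
    have hmem : ∀ t ∈ Icc (0:ℝ) 1, ∀ z ∈ closure Ω, z0 + (t : ℂ) • (z - z0) ∈ closure Ω := by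
      intro t ht z hz
      rcases ht.2.eq_or_lt with rfl | h1
      · simpa using hz
      · exact subset_closure (dilate_mem hΩo hΩcv h0 hz ht.1 h1)
    let F : ℝ × (Fin n → ℂ) → ℂ := fun p =>
      (p.1 : ℂ) ^ m * AinfExt f ℓ (z0 + (p.1 : ℂ) • (p.2 - z0)) - AinfExt f ℓ p.2
    have hF : ContinuousOn F (Icc (0:ℝ) 1 ×ˢ L) := by
      refine ContinuousOn.sub (ContinuousOn.mul (by fun_prop) ?_) ?_
      · exact (AinfExt_continuousOn f ℓ).comp (t := closure Ω)
          (f := fun p : ℝ × (Fin n → ℂ) => z0 + (p.1 : ℂ) • (p.2 - z0)) (by fun_prop)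
          (fun p hp => hmem p.1 hp.1 p.2 (hLΩ hp.2))
      · exact (AinfExt_continuousOn f ℓ).comp (t := closure Ω)
          (f := fun p : ℝ × (Fin n → ℂ) => p.2) (by fun_prop) (fun p hp => hLΩ hp.2)
    have key : ∀ᶠ t : ℝ in 𝓝 1, ∀ z ∈ L, ((t, z) ∈ Icc (0:ℝ) 1 ×ˢ L → ‖F (t, z)‖ < ε) := by
      refine hL.eventually_forall_of_forall_eventually
        (P := fun t z => ((t, z) ∈ Icc (0:ℝ) 1 ×ˢ L → ‖F (t, z)‖ < ε)) fun y hy => ?_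
      have h1 := hF (1, y) ⟨by simp, hy⟩
      have h2 : F (1, y) = 0 := by simp [F]
      have h3 : Tendsto (fun p => ‖F p‖) (𝓝[Icc (0:ℝ) 1 ×ˢ L] (1, y)) (𝓝 0) := by
        have := h1.norm
        rw [ContinuousWithinAt, h2, norm_zero] at this
        exact this
      exact eventually_nhdsWithin_iff.1 (h3.eventually_lt_const hε)
    filter_upwards [key.filter_mono nhdsWithin_le_nhds, self_mem_nhdsWithin,
      (eventually_gt_nhds (show (0:ℝ) < 1 by norm_num)).filter_mono nhdsWithin_le_nhds]
      with t ht h1 h00 z hz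
    have h5 := ht z hz ⟨⟨h00.le, (mem_Iio.1 h1).le⟩, hz⟩
    have h7 : ∀ z, (z0 - (t : ℂ) • z0) + (t : ℂ) • z = z0 + (t : ℂ) • (z - z0) := by
      intro z; rw [smul_sub]; abel
    have h6 : (fun z => f.1 (z0 + (t : ℂ) • (z - z0))) =
        fun z => f.1 ((z0 - (t : ℂ) • z0) + (t : ℂ) • z) := by
      ext z; rw [h7]
    rw [h6, hm]
    simp only [h7]
    rw [← AinfExt_eqOn f ℓ (dilate_mem hΩo hΩcv h0 (hLΩ hz) h00.le h1)]
    exact h5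
  have h2 := ((Filter.eventually_all_finset J).2 main).and
    ((eventually_gt_nhds (show (0:ℝ) < 1 by norm_num)).filter_mono nhdsWithin_le_nhds)
  obtain ⟨t, ⟨ht, ht0⟩, ht1⟩ := (h2.and self_mem_nhdsWithin).exists
  exact ⟨t, ht0, ht1, ht⟩

lemma mix_poly {V L K : Set (Fin n → ℂ)} (hV : IsOpen V) (hL : IsCompact L) (hLV : L ⊆ V)
    (hLc : Convex ℝ L) (hK : IsCompact K)
    (hKc : Convex ℝ K) (hLK : Disjoint L K) {z0 : Fin n → ℂ} (h0 : z0 ∈ L)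
    {h : (Fin n → ℂ) → ℂ} (hh : DifferentiableOn ℂ h V) (P : MvPolynomial (Fin n) ℂ) 
    {ε : ℝ} (hε : 0 < ε) :
    ∃ Q : MvPolynomial (Fin n) ℂ, (∀ z ∈ L, ‖mvEval Q z - h z‖ < ε) ∧
      (∀ z ∈ K, ‖mvEval Q z - mvEval P z‖ < ε) := by
  obtain ⟨Q, hQ⟩ := runge_convex hV hL z0 (fun z hz s hs => by
    apply hLV
    have := hLc.add_smul_sub_mem h0 hz hs
    convert this using 1
    ext i; simp) hh (show 0 < ε / 2 by positivity)
  obtain ⟨M', hM'⟩ := (hL.union hK).exists_bound_of_continuousOn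
    (f := fun z => mvEval P z - mvEval Q z)
    ((mvEval_continuous P).sub (mvEval_continuous Q)).continuousOn
  obtain ⟨M, hM, hM0⟩ : ∃ M, (∀ z ∈ L ∪ K, ‖mvEval P z - mvEval Q z‖ ≤ M) ∧ 0 < M :=
    ⟨max M' 1, fun z hz => (hM' z hz).trans (le_max_left _ _), by positivity⟩
  obtain ⟨H, hH1, hH2⟩ := step_poly hL hLc hK hKc hLK (show 0 < ε / (2 * M) by positivity)
  have hval : ∀ z, mvEval (Q + (P - Q) * H) z =
      mvEval Q z + (mvEval P z - mvEval Q z) * mvEval H z := fun z => by simp [mvEval]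
  have hMε : M * (ε / (2 * M)) = ε / 2 := by field_simp
  refine ⟨Q + (P - Q) * H, fun z hz => ?_, fun z hz => ?_⟩
  · rw [hval, add_sub_right_comm]
    have h1 := norm_add_le (mvEval Q z - h z) ((mvEval P z - mvEval Q z) * mvEval H z)
    rw [norm_mul] at h1
    have h2 : ‖mvEval P z - mvEval Q z‖ * ‖mvEval H z‖ ≤ M * (ε / (2 * M)) :=
      mul_le_mul (hM z (Or.inl hz)) (hH1 z hz).le (norm_nonneg _) hM0.le
    linarith [hQ z hz]
  · rw [hval, show mvEval Q z + (mvEval P z - mvEval Q z) * mvEval H z - mvEval P z =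
      (mvEval P z - mvEval Q z) * (mvEval H z - 1) by ring, norm_mul]
    have h2 : ‖mvEval P z - mvEval Q z‖ * ‖mvEval H z - 1‖ ≤ M * (ε / (2 * M)) :=
      mul_le_mul (hM z (Or.inr hz)) (hH2 z hz).le (norm_nonneg _) hM0.le
    linarith

lemma main_approx {Ω : Set (Fin n → ℂ)} (hΩo : IsOpen Ω) (hΩcv : Convex ℝ Ω)
    (f : AinfSpace n Ω) {K : Set (Fin n → ℂ)} (hK : IsCompact K) (hKc : Convex ℝ K)
    (hKΩ : K ∩ closure Ω = ∅) (P : MvPolynomial (Fin n) ℂ) (J : Finset (Fin n → ℕ)) (R : ℝ)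
    {ε : ℝ} (hε : 0 < ε) :
    ∃ Q : MvPolynomial (Fin n) ℂ,
      (∀ ℓ ∈ J, ∀ z ∈ closure Ω ∩ Metric.closedBall 0 R,
        ‖Dml ℓ (mvEval Q) z - AinfExt f ℓ z‖ < ε) ∧
      (∀ z ∈ K, ‖mvEval Q z - mvEval P z‖ < ε) := by
  rcases Ω.eq_empty_or_nonempty with rfl | ⟨z0, h0⟩
  · exact ⟨P, by simp, by simp [hε]⟩
  let R' := max R ‖z0‖
  let L := closure Ω ∩ Metric.closedBall 0 R'
  have hL : IsCompact L := (isCompact_closedBall 0 R').inter_left isClosed_closure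
  have hLc : Convex ℝ L := hΩcv.closure.inter (convex_closedBall 0 R')
  have h0L : z0 ∈ L := ⟨subset_closure h0, by simp [R']⟩
  obtain ⟨t, ht0, ht1, ht⟩ := dilate_approx hΩo hΩcv h0 f hL inter_subset_left J
    (show 0 < ε / 2 by positivity)
  let V : Set (Fin n → ℂ) := (fun z => z0 + (t : ℂ) • (z - z0)) ⁻¹' Ω
  have hV : IsOpen V := hΩo.preimage (by fun_prop)
  have hf : DifferentiableOn ℂ (fun z => f.1 (z0 + (t : ℂ) • (z - z0))) V :=
    f.2.1.comp (t := Ω) (f := fun z => z0 + (t : ℂ) • (z - z0)) (by fun_prop) (fun z hz => hz)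
  have hLV : L ⊆ V ∩ Kᶜ := by
    intro z hz
    refine ⟨dilate_mem hΩo hΩcv h0 hz.1 ht0.le ht1, fun hzK => ?_⟩
    have : z ∈ K ∩ closure Ω := ⟨hzK, hz.1⟩
    rw [hKΩ] at this; exact this
  obtain ⟨r, hr, hrV⟩ := hL.exists_cthickening_subset_open
    (hV.inter hK.isClosed.isOpen_compl) hLV
  let L' := Metric.cthickening r L
  have hL' : IsCompact L' := hL.cthickening
  have hLL' : L ⊆ L' := Metric.self_subset_cthickening L
  choose Q hQ1 hQ2 using fun k : ℕ => mix_poly hV hL' (hrV.trans inter_subset_left)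
    (hLc.cthickening r) hK hKc
    (Set.disjoint_left.2 fun z hz hzK => (hrV hz).2 hzK) (hLL' h0L) hf P
    (show (0:ℝ) < 1 / ((k:ℝ) + 1) by positivity)
  have hlim : ∀ δ > 0, ∀ᶠ k : ℕ in atTop, 1 / ((k:ℝ) + 1) < δ := fun δ hδ =>
    tendsto_one_div_add_atTop_nhds_zero_nat.eventually_lt_const hδ
  let V' := Metric.thickening r L
  have hV' : IsOpen V' := Metric.isOpen_thickening
  have hV'L : V' ⊆ L' := Metric.thickening_subset_cthickening r L
  have hunif : TendstoUniformlyOn (fun k => mvEval (Q k))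
      (fun z => f.1 (z0 + (t : ℂ) • (z - z0))) atTop V' := by
    rw [Metric.tendstoUniformlyOn_iff]
    intro δ hδ
    filter_upwards [hlim δ hδ] with k hk z hz
    rw [dist_comm, dist_eq_norm]
    exact (hQ1 k z (hV'L hz)).trans hk
  have hD : ∀ ℓ ∈ J, ∀ᶠ k : ℕ in atTop, ∀ z ∈ L,
      ‖Dml ℓ (mvEval (Q k)) z - Dml ℓ (fun z => f.1 (z0 + (t : ℂ) • (z - z0))) z‖ < ε / 2 := by
    intro ℓ _
    have h1 := Dml_tendsto hV' (fun k => (mvEval_differentiable (Q k)).differentiableOn)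
      hunif.tendstoLocallyUniformlyOn ℓ
    have h2 := (tendstoLocallyUniformlyOn_iff_forall_isCompact hV').1 h1 L
      (Metric.self_subset_thickening hr L) hL
    filter_upwards [Metric.tendstoUniformlyOn_iff.1 h2 (ε / 2) (by positivity)] with k hk z hz
    rw [← dist_eq_norm, dist_comm]
    exact hk z hz
  obtain ⟨k, hk1, hk2⟩ := (((Filter.eventually_all_finset J).2 hD).and (hlim ε hε)).exists
  refine ⟨Q k, fun ℓ hℓ z hz => ?_, fun z hz => (hQ2 k z hz).trans hk2⟩
  have hzL : z ∈ L := ⟨hz.1, Metric.closedBall_subset_closedBall (le_max_left _ _) hz.2⟩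
  have h1 := hk1 ℓ hℓ z hzL
  have h2 := ht ℓ hℓ z hzL
  have h3 := norm_add_le (Dml ℓ (mvEval (Q k)) z -
    Dml ℓ (fun z => f.1 (z0 + (t : ℂ) • (z - z0))) z)
    (Dml ℓ (fun z => f.1 (z0 + (t : ℂ) • (z - z0))) z - AinfExt f ℓ z)
  rw [sub_add_sub_cancel] at h3
  linarith


end

section
variable {n : ℕ} {Ω : Set (Fin n → ℂ)}

/-- the map defining the topology of `A^∞(Ω)` -/
def Aemb (f : AinfSpace n Ω) : (Fin n → ℕ) → C(closure Ω, ℂ) := fun ℓ =>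
  ⟨(closure Ω).domRestrict (AinfExt f ℓ),
        continuousOn_iff_continuous_domRestrict.mp (AinfExt_continuousOn f ℓ)⟩

lemma Aemb_inducing : IsInducing (Aemb : AinfSpace n Ω → _) := ⟨rfl⟩

lemma Aemb_apply (f : AinfSpace n Ω) (ℓ : Fin n → ℕ) (z : closure Ω) :
    Aemb f ℓ z = AinfExt f ℓ z := rfl

lemma AinfExt_unique (f : AinfSpace n Ω) (ℓ : Fin n → ℕ) {g : (Fin n → ℂ) → ℂ}
    (hg : ContinuousOn g (closure Ω)) (hgf : EqOn g (Dml ℓ f.1) Ω) :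
    EqOn (AinfExt f ℓ) g (closure Ω) :=
  ((AinfExt_eqOn f ℓ).trans hgf.symm).of_subset_closure (AinfExt_continuousOn f ℓ) hg
    subset_closure subset_rfl

lemma Dml_continuous_poly (ℓ : Fin n → ℕ) (Q : MvPolynomial (Fin n) ℂ) :
    Continuous (Dml ℓ (mvEval Q)) := by
  rw [Dml_mvEval]; exact mvEval_continuous _

/-- polynomials as elements of `A^∞(Ω)` -/
def toAinf (Ω : Set (Fin n → ℂ)) (Q : MvPolynomial (Fin n) ℂ) : AinfSpace n Ω :=
  ⟨mvEval Q, (mvEval_differentiable Q).differentiableOn, fun ℓ =>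
    ⟨Dml ℓ (mvEval Q), (Dml_continuous_poly ℓ Q).continuousOn, fun _ _ => rfl⟩⟩

lemma toAinf_ext (Q : MvPolynomial (Fin n) ℂ) (ℓ : Fin n → ℕ) :
    EqOn (AinfExt (toAinf Ω Q) ℓ) (Dml ℓ (mvEval Q)) (closure Ω) :=
  AinfExt_unique _ _ (Dml_continuous_poly ℓ Q).continuousOn fun _ _ => rfl

lemma Dml_zero (f : (Fin n → ℂ) → ℂ) : Dml 0 f = f := by
  unfold Dml
  induction List.finRange n with
  | nil => rfl
  | cons i l ih => simp [ih]

instance closure_lc : LocallyCompactSpace (closure Ω) :=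
  (isClosed_closure (s := Ω)).isClosedEmbedding_subtypeVal.locallyCompactSpace

instance closure_sc : SigmaCompactSpace (closure Ω) :=
  (isClosed_closure (s := Ω)).isClosedEmbedding_subtypeVal.sigmaCompactSpace

lemma Aemb_closed_range (hΩo : IsOpen Ω) : IsClosed (range (Aemb : AinfSpace n Ω → _)) := by
  classical
  apply isClosed_of_closure_subset
  intro g hg
  obtain ⟨u, hu, hlim⟩ := mem_closure_iff_seq_limit.1 hg
  choose f hf using hu
  obtain rfl : (fun k => Aemb (f k)) = u := funext hf
  let G : (Fin n → ℕ) → (Fin n → ℂ) → ℂ := fun ℓ z =>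
    if h : z ∈ closure Ω then g ℓ ⟨z, h⟩ else 0
  have hGg : ∀ ℓ (z : closure Ω), G ℓ z = g ℓ z := fun ℓ z => by simp [G]
  have hGc : ∀ ℓ, ContinuousOn (G ℓ) (closure Ω) := fun ℓ => by
    rw [continuousOn_iff_continuous_domRestrict]
    convert (g ℓ).continuous using 1
    ext z; exact hGg ℓ z
  have hconv : ∀ ℓ, ∀ C ⊆ closure Ω, IsCompact C →
      TendstoUniformlyOn (fun k => AinfExt (f k) ℓ) (G ℓ) atTop C := by
    intro ℓ C hC hCc
    have h1 := (tendsto_pi_nhds.1 hlim ℓ)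
    rw [ContinuousMap.tendsto_iff_forall_isCompact_tendstoUniformlyOn] at h1
    have h2 := h1 (Subtype.val ⁻¹' C)
      ((isClosed_closure (s := Ω)).isClosedEmbedding_subtypeVal.isCompact_preimage hCc)
    rw [Metric.tendstoUniformlyOn_iff] at h2 ⊢
    intro ε hε
    filter_upwards [h2 ε hε] with k hk z hz
    have := hk ⟨z, hC hz⟩ hz
    rw [← hGg] at this
    exact this
  have hDconv : ∀ ℓ, TendstoLocallyUniformlyOn (fun k => Dml ℓ (f k).1) (G ℓ) atTop Ω := by
    intro ℓ
    rw [tendstoLocallyUniformlyOn_iff_forall_isCompact hΩo]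
    intro C hC hCc
    exact (hconv ℓ C (hC.trans subset_closure) hCc).congr
      (Eventually.of_forall fun k z hz => AinfExt_eqOn (f k) ℓ (hC hz))
  have h0 := hDconv 0
  simp only [Dml_zero] at h0
  have hdiff := (weierstrass hΩo (fun k => (f k).2.1) h0).1
  have hEq : ∀ ℓ, EqOn (G ℓ) (Dml ℓ (G 0)) Ω := by
    intro ℓ z hz
    have h1 := (hDconv ℓ).tendsto_at hz
    have h2 := (Dml_tendsto hΩo (fun k => (f k).2.1) h0 ℓ).tendsto_at hz
    exact tendsto_nhds_unique h1 h2
  have hmem : AinfMem n Ω (G 0) := ⟨hdiff, fun ℓ => ⟨G ℓ, hGc ℓ, hEq ℓ⟩⟩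
  let F : AinfSpace n Ω := ⟨G 0, hmem⟩
  refine ⟨F, ?_⟩
  funext ℓ
  ext z
  exact (AinfExt_unique F ℓ (hGc ℓ) (hEq ℓ) z.2).trans (hGg ℓ z)

lemma Ainf_baire (hΩo : IsOpen Ω) : BaireSpace (AinfSpace n Ω) := by
  have key := (Aemb_inducing (n := n) (Ω := Ω)).eq_induced
  letI us : UniformSpace (AinfSpace n Ω) := UniformSpace.comap Aemb inferInstance
  have hui : IsUniformInducing (Aemb : AinfSpace n Ω → _) := ⟨rfl⟩
  haveI : CompleteSpace (AinfSpace n Ω) := by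
    rw [completeSpace_iff_isComplete_range hui]
    exact (Aemb_closed_range hΩo).isComplete
  haveI : (uniformity (AinfSpace n Ω)).IsCountablyGenerated := by
    rw [← hui.comap_uniformity]
    infer_instance
  haveI : @BaireSpace (AinfSpace n Ω) us.toTopologicalSpace := by
    letI := us.toTopologicalSpace
    haveI : TopologicalSpace.IsCompletelyPseudoMetrizableSpace (AinfSpace n Ω) :=
      .of_completeSpace_pseudometrizable
    exact BaireSpace.of_completelyPseudoMetrizable
  rw [key]; exact this

lemma ext_joint (ℓ : Fin n → ℕ) :
    Continuous fun p : AinfSpace n Ω × closure Ω => AinfExt p.1 ℓ p.2 := by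
  have : Continuous fun p : AinfSpace n Ω × closure Ω => (Aemb p.1 ℓ) p.2 := by
    have h1 : Continuous fun p : AinfSpace n Ω × closure Ω => Aemb p.1 ℓ :=
      ((continuous_apply ℓ).comp Aemb_inducing.continuous).comp continuous_fst
    exact h1.eval continuous_snd
  exact this

lemma open_forall {X Y : Type*} [TopologicalSpace X] [TopologicalSpace Y] {C : Set Y}
    (hC : IsCompact C) {F : X × Y → ℂ} (hF : Continuous F) (δ : ℝ) :
    IsOpen {x | ∀ y ∈ C, ‖F (x, y)‖ < δ} := by
  rw [isOpen_iff_mem_nhds]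
  intro x hx
  exact hC.eventually_forall_of_forall_eventually (P := fun x y => ‖F (x, y)‖ < δ) fun y hy =>
    (hF.norm.tendsto (x, y)).eventually_lt_const (hx y hy)

/-- closed balls in the closure of `Ω` -/
def ballΩ (Ω : Set (Fin n → ℂ)) (N : ℕ) : Set (closure Ω) :=
  Subtype.val ⁻¹' (Metric.closedBall 0 (N : ℝ))

lemma ballΩ_compact (N : ℕ) : IsCompact (ballΩ Ω N) :=
  (isClosed_closure (s := Ω)).isClosedEmbedding_subtypeVal.isCompact_preimage
    (isCompact_closedBall _ _)

/-- The basic sets. -/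
def Eset (Ω : Set (Fin n → ℂ)) (Nj : ℕ → Fin n → ℕ) (K : Set (Fin n → ℂ))
    (P : MvPolynomial (Fin n) ℂ) (N lam : ℕ) : Set (AinfSpace n Ω) :=
  {f | ∀ p ∈ ballΩ Ω N ×ˢ K,
      ‖pSumExt Nj (AinfExt f) p.1 lam p.2 - mvEval P p.2‖ < 1 / ((N : ℝ) + 1)} ∩
  ⋂ j ∈ Finset.range (N + 1), {f | ∀ p ∈ ballΩ Ω N ×ˢ ballΩ Ω N,
      ‖Dml (Nj j) (pSumExt Nj (AinfExt f) p.1 lam) p.2 - AinfExt f (Nj j) p.2‖ <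
        1 / ((N : ℝ) + 1)}

lemma Eset_open (Nj : ℕ → Fin n → ℕ) {K : Set (Fin n → ℂ)} (hK : IsCompact K)
    (P : MvPolynomial (Fin n) ℂ) (N lam : ℕ) : IsOpen (Eset Ω Nj K P N lam) := by
  refine IsOpen.inter ?_ (isOpen_biInter_finset fun j _ => ?_)
  · refine open_forall (X := AinfSpace n Ω) (Y := closure Ω × (Fin n → ℂ))
      (F := fun x => pSumExt Nj (AinfExt x.1) x.2.1 lam x.2.2 - mvEval P x.2.2)
      ((ballΩ_compact N).prod hK) ?_ _
    refine Continuous.sub ?_ ((mvEval_continuous P).comp (by fun_prop))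
    unfold pSumExt
    refine continuous_finsetSum _ fun j _ => ?_
    refine Continuous.mul (Continuous.mul continuous_const ?_) ?_
    · exact (ext_joint (Nj j)).comp (continuous_fst.prodMk (continuous_fst.comp continuous_snd))
    · refine continuous_finsetProd _ fun i _ => ?_
      refine Continuous.pow (Continuous.sub ?_ ?_) _
      · exact (continuous_apply i).comp (continuous_snd.comp continuous_snd)
      · exact (continuous_apply i).comp
          (continuous_subtype_val.comp (continuous_fst.comp continuous_snd))
  · refine open_forall (X := AinfSpace n Ω) (Y := closure Ω × closure Ω)
      (F := fun x => Dml (Nj j) (pSumExt Nj (AinfExt x.1) x.2.1 lam) x.2.2 -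
        AinfExt x.1 (Nj j) x.2.2)
      ((ballΩ_compact N).prod (ballΩ_compact N)) ?_ _
    simp only [Dml_pSumExt]
    refine Continuous.sub ?_
      ((ext_joint (Nj j)).comp (continuous_fst.prodMk (continuous_snd.comp continuous_snd)))
    refine continuous_finsetSum _ fun j _ => ?_
    refine Continuous.mul (Continuous.mul continuous_const ?_) ?_
    · exact (ext_joint (Nj j)).comp (continuous_fst.prodMk (continuous_fst.comp continuous_snd))
    · refine (mvEval_continuous _).comp (Continuous.sub ?_ ?_)
      · exact continuous_subtype_val.comp (continuous_snd.comp continuous_snd)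
      · exact continuous_subtype_val.comp (continuous_fst.comp continuous_snd)

lemma pSumExt_congr (Nj : ℕ → Fin n → ℕ) {g g' : (Fin n → ℕ) → (Fin n → ℂ) → ℂ} (ζ : Fin n → ℂ)
    (h : ∀ ℓ, g ℓ ζ = g' ℓ ζ) (lam : ℕ) : pSumExt Nj g ζ lam = pSumExt Nj g' ζ lam := by
  ext z; simp [pSumExt, h]

lemma Eset_dense (hΩo : IsOpen Ω) (hΩcv : Convex ℝ Ω) {𝕄 : Set ℕ} (h𝕄 : 𝕄.Infinite)
    {Nj : ℕ → Fin n → ℕ} (hNj : Function.Bijective Nj) {K : Set (Fin n → ℂ)} (hK : IsCompact K)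
    (hKc : Convex ℝ K) (hKΩ : K ∩ closure Ω = ∅) (P : MvPolynomial (Fin n) ℂ) (N : ℕ) :
    Dense (⋃ lam ∈ 𝕄, Eset Ω Nj K P N lam) := by
  classical
  intro f
  choose Q hQ1 hQ2 using fun k : ℕ => main_approx hΩo hΩcv f hK hKc hKΩ P
    ((Finset.range (k + 1)).image Nj) (k : ℝ)
    (show (0:ℝ) < min (1 / ((k : ℝ) + 1)) (1 / ((N : ℝ) + 1)) by positivity)
  have hlim : Tendsto (fun k => toAinf Ω (Q k)) atTop (𝓝 f) := by
    rw [Aemb_inducing.tendsto_nhds_iff, tendsto_pi_nhds]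
    intro ℓ
    rw [ContinuousMap.tendsto_iff_forall_isCompact_tendstoUniformlyOn]
    intro C hC
    rw [Metric.tendstoUniformlyOn_iff]
    intro ε hε
    obtain ⟨j, rfl⟩ := hNj.2 ℓ
    obtain ⟨B, hB⟩ := (hC.image continuous_subtype_val).isBounded.exists_norm_le
    obtain ⟨k0, hk0⟩ := exists_nat_ge B
    filter_upwards [eventually_ge_atTop k0, eventually_ge_atTop j,
      tendsto_one_div_add_atTop_nhds_zero_nat.eventually_lt_const hε] with k hk1 hk2 hk3 z hz
    have h1 := hQ1 k (Nj j) (Finset.mem_image_of_mem _ (Finset.mem_range.2 (by omega))) z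
      ⟨z.2, by
        rw [mem_closedBall_zero_iff]
        exact ((hB _ ⟨z, hz, rfl⟩).trans hk0).trans (by exact_mod_cast hk1)⟩
    rw [dist_comm, dist_eq_norm]
    change ‖AinfExt (toAinf Ω (Q k)) (Nj j) z - AinfExt f (Nj j) z‖ < ε
    rw [toAinf_ext (Q k) (Nj j) z.2]
    exact (h1.trans_le (min_le_left _ _)).trans hk3
  refine mem_closure_of_tendsto hlim (Eventually.of_forall fun k => ?_)
  obtain ⟨N0, hN0⟩ := taylor_poly Nj hNj (Q k)
  obtain ⟨lam, hlam, hlamN⟩ := h𝕄.exists_gt N0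
  simp only [mem_iUnion]
  have hT : ∀ ζ : closure Ω, pSumExt Nj (AinfExt (toAinf Ω (Q k))) ζ lam = mvEval (Q k) := by
    intro ζ
    rw [← hN0 lam hlamN.le ζ]
    exact pSumExt_congr Nj _ (fun ℓ => toAinf_ext (Q k) ℓ ζ.2) lam
  refine ⟨lam, hlam, ?_, ?_⟩
  · rintro ⟨ζ, z⟩ ⟨_, hz⟩
    simp only [hT]
    exact (hQ2 k z hz).trans_le (min_le_right _ _)
  · simp only [mem_iInter]
    rintro j _ ⟨ζ, z⟩ _
    simp only [hT]
    rw [toAinf_ext (Q k) (Nj j) z.2, sub_self, norm_zero]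
    positivity


end

section
variable {n : ℕ} {Ω : Set (Fin n → ℂ)}

/-- a countable family of compact convex sets -/
def Kfam (n : ℕ) (i : Finset ℕ × ℕ) : Set (Fin n → ℂ) :=
  Metric.cthickening (1 / ((i.2 : ℝ) + 1))
    (convexHull ℝ (TopologicalSpace.denseSeq (Fin n → ℂ) '' (i.1 : Set ℕ)))

lemma Kfam_compact (i : Finset ℕ × ℕ) : IsCompact (Kfam n i) :=
  ((i.1.finite_toSet.image _).isCompact_convexHull (𝕜 := ℝ)).cthickening

lemma Kfam_convex (i : Finset ℕ × ℕ) : Convex ℝ (Kfam n i) :=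
  (convex_convexHull ℝ _).cthickening _

lemma Kfam_exists {K : Set (Fin n → ℂ)} (hK : IsCompact K) (hKc : Convex ℝ K)
    (hKΩ : K ∩ closure Ω = ∅) : ∃ i, Kfam n i ∩ closure Ω = ∅ ∧ K ⊆ Kfam n i := by
  classical
  obtain ⟨δ, hδ, hδK⟩ := hK.exists_cthickening_subset_open
    (isClosed_closure (s := Ω)).isOpen_compl
    (by intro z hz hz'; exact (hKΩ ▸ (⟨hz, hz'⟩ : z ∈ K ∩ closure Ω) : z ∈ (∅ : Set _)))
  obtain ⟨m, hm⟩ := exists_nat_one_div_lt (half_pos hδ)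
  set r : ℝ := 1 / ((m : ℝ) + 1) with hr
  have hr0 : 0 < r := by positivity
  set d := TopologicalSpace.denseSeq (Fin n → ℂ)
  have hd : DenseRange d := TopologicalSpace.denseRange_denseSeq _
  -- cover by balls around dense points near K
  obtain ⟨t, ht⟩ := hK.elim_finite_subcover
    (fun j : {j : ℕ // d j ∈ Metric.cthickening r K} => Metric.ball (d j) r)
    (fun _ => Metric.isOpen_ball) (by
      intro z hz
      obtain ⟨j, hj⟩ := hd.exists_dist_lt z hr0
      refine mem_iUnion.2 ⟨⟨j, Metric.mem_cthickening_of_dist_le _ z _ _ hz ?_⟩, ?_⟩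
      · rw [dist_comm]; exact hj.le
      · exact hj)
  refine ⟨(t.image Subtype.val, m), ?_, ?_⟩
  · have h1 : convexHull ℝ (d '' ((t.image Subtype.val : Finset ℕ) : Set ℕ)) ⊆
        Metric.cthickening r K := by
      refine convexHull_min ?_ (hKc.cthickening _)
      rintro _ ⟨j, hj, rfl⟩
      simp only [Finset.coe_image, mem_image] at hj
      obtain ⟨x, _, rfl⟩ := hj
      exact x.2
    have h2 : Kfam n (t.image Subtype.val, m) ⊆ Metric.cthickening δ K := by
      refine (Metric.cthickening_subset_of_subset r h1).trans ?_
      refine (Metric.cthickening_cthickening_subset hr0.le hr0.le K).trans ?_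
      exact Metric.cthickening_mono (by linarith) _
    ext z
    simp only [mem_inter_iff, mem_empty_iff_false, iff_false, not_and]
    intro hz
    exact hδK (h2 hz)
  · intro z hz
    obtain ⟨j, hj, hzj⟩ := mem_iUnion₂.1 (ht hz)
    refine Metric.mem_cthickening_of_dist_le _ (d j) _ _ (subset_convexHull ℝ _ ?_) hzj.le
    exact ⟨j, by simpa using ⟨j.2, hj⟩, rfl⟩

lemma poly_dense {K : Set (Fin n → ℂ)} (hK : IsCompact K) :
    ∃ p : ℕ → MvPolynomial (Fin n) ℂ, ∀ P : MvPolynomial (Fin n) ℂ, ∀ ε > 0,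
      ∃ k, ∀ z ∈ K, ‖mvEval (p k) z - mvEval P z‖ < ε := by
  haveI : CompactSpace K := isCompact_iff_compactSpace.1 hK
  let S : Set C(K, ℂ) := range fun q : MvPolynomial (Fin n) ℂ => toC K (mvEval q)
  haveI : Nonempty S := ⟨⟨_, 0, rfl⟩⟩
  have h := TopologicalSpace.denseRange_denseSeq S
  choose p hp using fun k : ℕ => (TopologicalSpace.denseSeq S k).2
  refine ⟨p, fun P ε hε => ?_⟩
  obtain ⟨k, hk⟩ := h.exists_dist_lt (⟨toC K (mvEval P), P, rfl⟩ : S) hε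
  refine ⟨k, fun z hz => ?_⟩
  rw [Subtype.dist_eq, dist_comm, ← hp k] at hk
  have := (ContinuousMap.dist_lt_iff hε).1 hk ⟨z, hz⟩
  simp only [toC_apply (mvEval_continuous _).continuousOn] at this
  rwa [dist_eq_norm] at this

lemma one_div_tendsto_lt {ε : ℝ} (hε : 0 < ε) : ∀ᶠ N : ℕ in atTop, 1 / ((N : ℝ) + 1) < ε :=
  tendsto_one_div_add_atTop_nhds_zero_nat.eventually_lt_const hε

/-- universality property for a fixed function -/
def Univ (Ω : Set (Fin n → ℂ)) (𝕄 : Set ℕ) (Nj : ℕ → Fin n → ℕ) : Set (AinfSpace n Ω) :=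
  {f : AinfSpace n Ω |
        ∀ K : Set (Fin n → ℂ), IsCompact K → Convex ℝ K → K ∩ closure Ω = ∅ →
          ∀ P : MvPolynomial (Fin n) ℂ, ∃ lam : ℕ → ℕ, (∀ N, lam N ∈ 𝕄) ∧
            ∀ L : Set (Fin n → ℂ), L ⊆ closure Ω → IsCompact L →
              TendstoUniformlyOn
                (fun N (q : (Fin n → ℂ) × (Fin n → ℂ)) =>
                  pSumExt Nj (AinfExt f) q.1 (lam N) q.2)
                (fun q => mvEval P q.2) atTop (L ×ˢ K) ∧
              ∀ ℓ : Fin n → ℕ,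
                TendstoUniformlyOn
                  (fun N (q : (Fin n → ℂ) × (Fin n → ℂ)) =>
                    Dml ℓ (pSumExt Nj (AinfExt f) q.1 (lam N)) q.2)
                  (fun q => AinfExt f ℓ q.2) atTop (L ×ˢ L)}

lemma Univ_sub_Eset {𝕄 : Set ℕ} {Nj : ℕ → Fin n → ℕ} {f : AinfSpace n Ω} (hf : f ∈ Univ Ω 𝕄 Nj)
    {K : Set (Fin n → ℂ)} (hK : IsCompact K) (hKc : Convex ℝ K) (hKΩ : K ∩ closure Ω = ∅)
    (P : MvPolynomial (Fin n) ℂ) (N : ℕ) : f ∈ ⋃ lam ∈ 𝕄, Eset Ω Nj K P N lam := by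
  obtain ⟨lam, hlam, h⟩ := hf K hK hKc hKΩ P
  have hL := h (closure Ω ∩ Metric.closedBall 0 (N : ℝ)) inter_subset_left
    ((isCompact_closedBall _ _).inter_left isClosed_closure)
  have hε : (0 : ℝ) < 1 / ((N : ℝ) + 1) := by positivity
  have h1 := Metric.tendstoUniformlyOn_iff.1 hL.1 _ hε
  have h2 : ∀ᶠ M in atTop, ∀ j ∈ Finset.range (N + 1), _ :=
    (Finset.eventually_all _).2 fun j _ => Metric.tendstoUniformlyOn_iff.1 (hL.2 (Nj j)) _ hε
  obtain ⟨M, hM1, hM2⟩ := (h1.and h2).exists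
  simp only [mem_iUnion]
  refine ⟨lam M, hlam M, ?_, ?_⟩
  · rintro ⟨ζ, z⟩ ⟨hζ, hz⟩
    rw [← dist_eq_norm, dist_comm]
    exact hM1 (ζ, z) ⟨⟨ζ.2, hζ⟩, hz⟩
  · simp only [mem_iInter]
    rintro j hj ⟨ζ, z⟩ ⟨hζ, hz⟩
    rw [← dist_eq_norm, dist_comm]
    exact hM2 j hj (ζ, z) ⟨⟨ζ.2, hζ⟩, ⟨z.2, hz⟩⟩

lemma Eset_sub_Univ {𝕄 : Set ℕ} {Nj : ℕ → Fin n → ℕ} (hNj : Function.Bijective Nj)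
    {f : AinfSpace n Ω} {K : Set (Fin n → ℂ)} {K' : Set (Fin n → ℂ)} (hKK : K ⊆ K')
    {p : ℕ → MvPolynomial (Fin n) ℂ}
    (hp : ∀ P : MvPolynomial (Fin n) ℂ, ∀ ε > 0, ∃ k, ∀ z ∈ K', ‖mvEval (p k) z - mvEval P z‖ < ε)
    (hf : ∀ k N, f ∈ ⋃ lam ∈ 𝕄, Eset Ω Nj K' (p k) N lam)
    (P : MvPolynomial (Fin n) ℂ) : ∃ lam : ℕ → ℕ, (∀ N, lam N ∈ 𝕄) ∧
            ∀ L : Set (Fin n → ℂ), L ⊆ closure Ω → IsCompact L →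
              TendstoUniformlyOn
                (fun N (q : (Fin n → ℂ) × (Fin n → ℂ)) =>
                  pSumExt Nj (AinfExt f) q.1 (lam N) q.2)
                (fun q => mvEval P q.2) atTop (L ×ˢ K) ∧
              ∀ ℓ : Fin n → ℕ,
                TendstoUniformlyOn
                  (fun N (q : (Fin n → ℂ) × (Fin n → ℂ)) =>
                    Dml ℓ (pSumExt Nj (AinfExt f) q.1 (lam N)) q.2)
                  (fun q => AinfExt f ℓ q.2) atTop (L ×ˢ L) := by
  choose k hk using fun N : ℕ => hp P (1 / ((N : ℝ) + 1)) (by positivity)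
  have hf' : ∀ N, ∃ lam, lam ∈ 𝕄 ∧ f ∈ Eset Ω Nj K' (p (k N)) N lam := fun N => by
    simpa using hf (k N) N
  choose lam hlam hE using hf'
  refine ⟨lam, hlam, fun L hL hLc => ?_⟩
  obtain ⟨B, hB⟩ := hLc.isBounded.exists_norm_le
  obtain ⟨N0, hN0⟩ := exists_nat_ge B
  have hmem : ∀ N, N0 ≤ N → ∀ z (hz : z ∈ L), (⟨z, hL hz⟩ : closure Ω) ∈ ballΩ Ω N := by
    intro N hN z hz
    change z ∈ Metric.closedBall 0 (N : ℝ)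
    rw [mem_closedBall_zero_iff]
    exact ((hB z hz).trans hN0).trans (by exact_mod_cast hN)
  constructor
  · rw [Metric.tendstoUniformlyOn_iff]
    intro ε hε
    filter_upwards [eventually_ge_atTop N0, one_div_tendsto_lt (half_pos hε)] with N h1 h2
    rintro ⟨ζ, z⟩ ⟨hζ, hz⟩
    have h3 := (hE N).1 (⟨ζ, hL hζ⟩, z) ⟨hmem N h1 ζ hζ, hKK hz⟩
    have h4 := hk N z (hKK hz)
    rw [← dist_eq_norm] at h3 h4
    rw [dist_comm]
    have h5 := dist_triangle (pSumExt Nj (AinfExt f) ζ (lam N) z) (mvEval (p (k N)) z) (mvEval P z)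
    simp only at h3 ⊢
    linarith
  · intro ℓ
    obtain ⟨j, rfl⟩ := hNj.2 ℓ
    rw [Metric.tendstoUniformlyOn_iff]
    intro ε hε
    filter_upwards [eventually_ge_atTop N0, eventually_ge_atTop j, one_div_tendsto_lt hε]
      with N h1 hj h2
    rintro ⟨ζ, z⟩ ⟨hζ, hz⟩
    have h3 := (hE N).2
    simp only [mem_iInter] at h3
    have h4 := h3 j (Finset.mem_range.2 (by omega)) (⟨ζ, hL hζ⟩, ⟨z, hL hz⟩)
      ⟨hmem N h1 ζ hζ, hmem N h1 z hz⟩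
    rw [← dist_eq_norm, dist_comm] at h4
    exact h4.trans h2

lemma Univ_main {𝕄 : Set ℕ} (h𝕄 : 𝕄.Infinite) (hΩo : IsOpen Ω) (hΩcv : Convex ℝ Ω)
    {Nj : ℕ → Fin n → ℕ} (hNj : Function.Bijective Nj) :
    (Univ Ω 𝕄 Nj).Nonempty ∧ Dense (Univ Ω 𝕄 Nj) ∧ IsGδ (Univ Ω 𝕄 Nj) := by
  haveI := Ainf_baire hΩo
  choose p hp using fun i : Finset ℕ × ℕ => poly_dense (Kfam_compact (n := n) i)
  let I := {i : Finset ℕ × ℕ // Kfam n i ∩ closure Ω = ∅} × ℕ × ℕ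
  let V : I → Set (AinfSpace n Ω) := fun x =>
    ⋃ lam ∈ 𝕄, Eset Ω Nj (Kfam n x.1.1) (p x.1.1 x.2.1) x.2.2 lam
  have hV : Univ Ω 𝕄 Nj = ⋂ x, V x := by
    apply Subset.antisymm
    · exact fun f hf => mem_iInter.2 fun x =>
        Univ_sub_Eset hf (Kfam_compact _) (Kfam_convex _) x.1.2 _ _
    · intro f hf K hK hKc hKΩ P
      obtain ⟨i, hi, hKi⟩ := Kfam_exists hK hKc hKΩ
      exact Eset_sub_Univ hNj hKi (hp i) (fun k N => mem_iInter.1 hf (⟨i, hi⟩, k, N)) P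
  have hVo : ∀ x, IsOpen (V x) := fun x =>
    isOpen_biUnion fun lam _ => Eset_open Nj (Kfam_compact _) _ _ _
  have hVd : ∀ x, Dense (V x) := fun x =>
    Eset_dense hΩo hΩcv h𝕄 hNj (Kfam_compact _) (Kfam_convex _) x.1.2 _ _
  have hd : Dense (Univ Ω 𝕄 Nj) := hV ▸ dense_iInter_of_isOpen hVo hVd
  haveI : Nonempty (AinfSpace n Ω) := ⟨toAinf Ω 0⟩
  exact ⟨hd.nonempty, hd, hV ▸ IsGδ.iInter fun x => (hVo x).isGδ⟩


end

/-- Corollary 3.4: universality in `A^∞(Ω)` with the center of expansion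
varying in compact subsets of the closure of `Ω`. -/
theorem cor3_4 (n : ℕ) (𝕄 : Set ℕ) (h𝕄 : 𝕄.Infinite)
    (Ω : Set (Fin n → ℂ)) (hΩo : IsOpen Ω) (hΩcv : Convex ℝ Ω)
    (Nj : ℕ → Fin n → ℕ) (hNj : Function.Bijective Nj) :
    ∃ U : Set (AinfSpace n Ω),
      U = {f : AinfSpace n Ω |
        ∀ K : Set (Fin n → ℂ), IsCompact K → Convex ℝ K → K ∩ closure Ω = ∅ →
          ∀ P : MvPolynomial (Fin n) ℂ, ∃ lam : ℕ → ℕ, (∀ N, lam N ∈ 𝕄) ∧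
            ∀ L : Set (Fin n → ℂ), L ⊆ closure Ω → IsCompact L →
              TendstoUniformlyOn
                (fun N (q : (Fin n → ℂ) × (Fin n → ℂ)) =>
                  pSumExt Nj (AinfExt f) q.1 (lam N) q.2)
                (fun q => mvEval P q.2) atTop (L ×ˢ K) ∧
              ∀ ℓ : Fin n → ℕ,
                TendstoUniformlyOn
                  (fun N (q : (Fin n → ℂ) × (Fin n → ℂ)) =>
                    Dml ℓ (pSumExt Nj (AinfExt f) q.1 (lam N)) q.2)
                  (fun q => AinfExt f ℓ q.2) atTop (L ×ˢ L)} ∧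
      U.Nonempty ∧ Dense U ∧ IsGδ U := by
  exact ⟨_, rfl, Univ_main h𝕄 hΩo hΩcv hNj⟩

end
end

section
/- Existence criterion instance (nonemptiness of the universal class): Let Ω ⊆ ℂⁿ be an open convex set, ζ ∈ Ω, and K ⊆ ℂⁿ a compact convex set with K ∩ Ω = ∅. For every holomorphic polynomial P on ℂⁿ, every compact set L ⊆ Ω, and every ε > 0, there exists a holomorphic polynomial Q on ℂⁿ which is a finite linear combination of the monomials (z−ζ)^{N_j}, such that sup_{z ∈ L} ‖Q(z)‖ < ε and sup_{z ∈ K} ‖Q(z) − P(z)‖ < ε; i.e., there exists b = (b₀,…,b_M, 0, 0, …) with finitely many nonzero terms such that Σ_{j=0}^{M} b_j (z−ζ)^{N_j} is uniformly small on L and uniformly ε-close to P on K. -/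
open Set Filter Topology

noncomputable section

lemma aux_spectrum {X : Type*} [TopologicalSpace X] [CompactSpace X]
    (S : Subalgebra ℂ C(X, ℂ)) (hS : IsClosed (S : Set C(X, ℂ))) (x : S)
    (hx : ∀ p, ((x : C(X, ℂ)) p).re ≠ 0) : ∀ k ∈ spectrum ℂ x, k.re ≠ 0 := by
  intro k hk hk0
  haveI : IsClosed (S : Set C(X, ℂ)) := hS
  haveI : CompleteSpace S := hS.completeSpace_coe
  have hcpt : IsCompact (spectrum ℂ x ∩ {z : ℂ | z.re = 0}) :=
    (spectrum.isCompact x).inter_right (isClosed_eq Complex.continuous_re continuous_const)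
  obtain ⟨a, ⟨ha, ha0⟩, hmax⟩ := hcpt.exists_isMaxOn ⟨k, hk, hk0⟩
    Complex.continuous_im.continuousOn
  have hfr : a ∈ frontier (spectrum ℂ x) := by
    rw [frontier_eq_closure_inter_closure]
    refine ⟨subset_closure ha, ?_⟩
    rw [Metric.mem_closure_iff]
    intro e he
    refine ⟨a + ((e / 2 : ℝ) : ℂ) * Complex.I, ?_, ?_⟩
    · intro hmem
      have h1 := hmax ⟨hmem, by simpa using ha0⟩
      simp at h1
      linarith
    · rw [dist_eq_norm]
      simp [abs_of_pos he]
      linarith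
  have := Subalgebra.frontier_spectrum S x hfr
  rw [ContinuousMap.spectrum_eq_range] at this
  obtain ⟨p, hp⟩ := this
  exact hx p (by rw [hp]; exact ha0)

lemma aux_re {k : ℂ} (h : ‖k + 1‖ = ‖k - 1‖) : k.re = 0 := by
  have h2 : Complex.normSq (k + 1) = Complex.normSq (k - 1) := by
    rw [Complex.normSq_eq_norm_sq, Complex.normSq_eq_norm_sq, h]
  simp [Complex.normSq_apply] at h2
  nlinarith

lemma aux_lt {k : ℂ} (h : 0 < k.re) : ‖k - 1‖ < ‖k + 1‖ := by
  have h2 : Complex.normSq (k - 1) < Complex.normSq (k + 1) := by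
    simp [Complex.normSq_apply]
    nlinarith
  rw [Complex.normSq_eq_norm_sq, Complex.normSq_eq_norm_sq] at h2
  exact lt_of_pow_lt_pow_left₀ 2 (norm_nonneg _) h2

lemma aux_unit {X : Type*} [TopologicalSpace X] [CompactSpace X]
    (S : Subalgebra ℂ C(X, ℂ)) (hS : IsClosed (S : Set C(X, ℂ))) (x : S)
    (hx : ∀ p, ((x : C(X, ℂ)) p).re ≠ 0) (N : ℕ) (hN : N ≠ 0) :
    IsUnit ((x + 1) ^ N + (x - 1) ^ N) := by
  set D : Polynomial ℂ := (Polynomial.X + 1) ^ N + (Polynomial.X - 1) ^ N with hD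
  have hD0 : D ≠ 0 := by
    intro h
    have : D.eval 1 = 0 := by rw [h]; simp
    simp [hD, hN] at this
  have hDx : Polynomial.aeval x D = (x + 1) ^ N + (x - 1) ^ N := by simp [hD]
  rw [← hDx, (IsAlgClosed.splits D).eq_prod_roots, map_mul]
  apply IsUnit.mul
  · rw [Polynomial.aeval_C]
    exact (IsUnit.mk0 _ (Polynomial.leadingCoeff_ne_zero.2 hD0)).map _
  · by_contra hcon
    obtain ⟨k, hk, hk0⟩ := spectrum.exists_mem_of_not_isUnit_aeval_prod hcon
    refine aux_spectrum S hS x hx k hk (aux_re ?_)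
    simp [hD] at hk0
    have := congrArg norm (eq_neg_of_add_eq_zero_left hk0)
    rw [norm_neg, norm_pow, norm_pow] at this
    exact (pow_left_inj₀ (norm_nonneg _) (norm_nonneg _) hN).1 this

lemma aux_est {a b v : ℂ} {δ : ℝ} (hδ : δ ≤ 1 / 2) (h : ‖b‖ ≤ δ * ‖a‖) (hv : v * (a + b) = 1) :
    ‖b * v‖ ≤ 2 * δ := by
  have h1 : ‖v‖ * ‖a + b‖ = 1 := by rw [← norm_mul, hv, norm_one]
  have h2 : ‖a‖ ≤ ‖a + b‖ + ‖b‖ := by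
    simpa using norm_sub_le (a + b) b
  have h3 := norm_nonneg a
  have h4 : ‖a‖ ≤ 2 * ‖a + b‖ := by nlinarith
  have hδ0 : ‖a‖ = 0 ∨ 0 ≤ δ := by
    rcases h3.eq_or_lt with h0 | h0
    · exact Or.inl h0.symm
    · right
      by_contra hneg
      push Not at hneg
      nlinarith [norm_nonneg b]
  rcases hδ0 with h0 | h0
  · exfalso
    have hb : ‖b‖ = 0 := le_antisymm (by simpa [h0] using h) (norm_nonneg b)
    rw [norm_eq_zero] at h0 hb
    simp [h0, hb] at hv
  · rw [norm_mul]
    calc ‖b‖ * ‖v‖ ≤ (δ * (2 * ‖a + b‖)) * ‖v‖ := by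
          gcongr
          exact h.trans (by gcongr)
      _ = 2 * δ * (‖v‖ * ‖a + b‖) := by ring
      _ = 2 * δ := by rw [h1, mul_one]

lemma aux_sup {E : Type*} [TopologicalSpace E] {T : Set E} (hT : IsCompact T) {f g : E → ℝ}
    (hf : Continuous f) (hg : Continuous g) (hf0 : ∀ z ∈ T, 0 ≤ f z)
    (hfg : ∀ z ∈ T, f z < g z) :
    ∃ s : ℝ, 0 ≤ s ∧ s < 1 ∧ ∀ z ∈ T, f z ≤ s * g z := by
  rcases T.eq_empty_or_nonempty with rfl | hne
  · exact ⟨0, le_rfl, one_pos, by simp⟩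
  have hpos : ∀ z ∈ T, 0 < g z := fun z hz => (hf0 z hz).trans_lt (hfg z hz)
  obtain ⟨a, ha, hmax⟩ := hT.exists_isMaxOn (f := fun z => f z / g z) hne
    (hf.continuousOn.div hg.continuousOn fun z hz => (hpos z hz).ne')
  refine ⟨f a / g a, div_nonneg (hf0 a ha) (hpos a ha).le, (div_lt_one (hpos a ha)).2 (hfg a ha), ?_⟩
  intro z hz
  exact (div_le_iff₀ (hpos z hz)).1 (hmax hz)

/-- Re-expansion of a polynomial around `ζ` along the enumeration. -/
lemma aux_expand {n : ℕ} (Nj : ℕ → Fin n → ℕ) (hNj : Function.Bijective Nj) (ζ : Fin n → ℂ)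
    (Q : MvPolynomial (Fin n) ℂ) :
    ∃ (M : ℕ) (b : ℕ → ℂ), ∀ z : Fin n → ℂ,
      ∑ j ∈ Finset.range (M + 1), b j * ∏ i, (z i - ζ i) ^ (Nj j i) = MvPolynomial.eval z Q := by
  classical
  set R : MvPolynomial (Fin n) ℂ :=
    MvPolynomial.aeval (fun i => MvPolynomial.X i + MvPolynomial.C (ζ i)) Q with hR
  have hRe : ∀ z, MvPolynomial.eval (fun i => z i - ζ i) R = MvPolynomial.eval z Q := by
    intro z
    rw [hR]
    clear hR R
    induction Q using MvPolynomial.induction_on with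
    | C a => simp
    | add p q hp hq => rw [map_add, map_add, map_add, hp, hq]
    | mul_X p i hp => rw [map_mul, map_mul, map_mul, hp]; simp
  let e : ℕ ≃ (Fin n →₀ ℕ) := (Equiv.ofBijective Nj hNj).trans Finsupp.equivFunOnFinite.symm
  have he : ∀ j i, e j i = Nj j i := fun j i => rfl
  refine ⟨R.support.sup e.symm, fun j => R.coeff (e j), fun z => ?_⟩
  rw [← hRe z, MvPolynomial.eval_eq']
  symm
  have h1 : ∑ d ∈ R.support, R.coeff d * ∏ i, (z i - ζ i) ^ d i
      = ∑ j ∈ R.support.map e.symm.toEmbedding, R.coeff (e j) * ∏ i, (z i - ζ i) ^ (e j i) := by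
    rw [Finset.sum_map]
    simp
  rw [h1]
  apply Finset.sum_subset
  · intro j hj
    rw [Finset.mem_map] at hj
    obtain ⟨d, hd, rfl⟩ := hj
    rw [Finset.mem_range, Nat.lt_succ_iff]
    exact Finset.le_sup (f := e.symm) hd
  · intro j _ hj
    have : R.coeff (e j) = 0 := by
      by_contra hne
      exact hj (Finset.mem_map.2 ⟨e j, MvPolynomial.mem_support_iff.2 hne, by simp⟩)
    rw [this, zero_mul]

lemma aux_main {n : ℕ} (K L : Set (Fin n → ℂ)) (hK : IsCompact K) (hL : IsCompact L)
    (G P : MvPolynomial (Fin n) ℂ)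
    (hGL : ∀ z ∈ L, (MvPolynomial.eval z G).re < 0) (hGK : ∀ z ∈ K, 0 < (MvPolynomial.eval z G).re)
    (ε : ℝ) (hε : 0 < ε) :
    ∃ Q : MvPolynomial (Fin n) ℂ, (∀ z ∈ L, ‖MvPolynomial.eval z Q‖ < ε) ∧
      ∀ z ∈ K, ‖MvPolynomial.eval z Q - MvPolynomial.eval z P‖ < ε := by
  have hLK : IsCompact (L ∪ K) := hL.union hK
  haveI : CompactSpace ↥(L ∪ K) := isCompact_iff_compactSpace.1 hLK
  have hcont : ∀ p : MvPolynomial (Fin n) ℂ, Continuous fun z : Fin n → ℂ =>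
    MvPolynomial.eval z p := fun p => MvPolynomial.continuous_eval p
  let φ : MvPolynomial (Fin n) ℂ →ₐ[ℂ] C(↥(L ∪ K), ℂ) :=
    MvPolynomial.aeval fun i => ⟨fun z => z.1 i, (continuous_apply i).comp continuous_subtype_val⟩
  have hφ : ∀ p z, φ p z = MvPolynomial.eval z.1 p := by
    intro p z
    induction p using MvPolynomial.induction_on with
    | C a => simp [φ]
    | add p q hp hq => simp [hp, hq]
    | mul_X p i hp => rw [map_mul, ContinuousMap.mul_apply, hp]; simp [φ]
  let S : Subalgebra ℂ C(↥(L ∪ K), ℂ) := φ.range.topologicalClosure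
  have hS : IsClosed (S : Set C(↥(L ∪ K), ℂ)) := Subalgebra.isClosed_topologicalClosure _
  have hmem : ∀ p, φ p ∈ S := fun p => Subalgebra.le_topologicalClosure _ ⟨p, rfl⟩
  let x : S := ⟨φ G, hmem G⟩
  have hx : ∀ p, ((x : C(↥(L ∪ K), ℂ)) p).re ≠ 0 := by
    rintro ⟨z, hz⟩
    change (φ G _).re ≠ 0
    rw [hφ]
    rcases hz with hz | hz
    · exact (hGL z hz).ne
    · exact (hGK z hz).ne'
  obtain ⟨s, hs0, hs1, hs⟩ := aux_sup hK (f := fun z => ‖MvPolynomial.eval z G - 1‖)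
    (g := fun z => ‖MvPolynomial.eval z G + 1‖) ((hcont G).sub continuous_const).norm
    ((hcont G).add continuous_const).norm (fun _ _ => norm_nonneg _)
    (fun z hz => aux_lt (hGK z hz))
  obtain ⟨t, ht0, ht1, ht⟩ := aux_sup hL (f := fun z => ‖MvPolynomial.eval z G + 1‖)
    (g := fun z => ‖MvPolynomial.eval z G - 1‖) ((hcont G).add continuous_const).norm
    ((hcont G).sub continuous_const).norm (fun _ _ => norm_nonneg _)
    (fun z hz => by
      have := aux_lt (k := -MvPolynomial.eval z G) (by simpa using hGL z hz)
      rw [← norm_neg, ← norm_neg (-MvPolynomial.eval z G + 1)] at this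
      ring_nf at this ⊢
      exact this)
  set B : ℝ := ‖φ P‖ with hB
  have hB0 : 0 ≤ B := norm_nonneg _
  set δ : ℝ := min (1 / 2) (ε / (4 * (B + 1))) with hδ
  have hδ0 : 0 < δ := by rw [hδ]; positivity
  have hδ2 : δ ≤ 1 / 2 := min_le_left _ _
  have hδB : 2 * δ * B < ε / 2 := by
    have h1 : δ ≤ ε / (4 * (B + 1)) := min_le_right _ _
    rw [le_div_iff₀ (by positivity)] at h1
    nlinarith
  have hmax1 : max s t < 1 := max_lt hs1 ht1
  obtain ⟨N, hN⟩ := exists_pow_lt_of_lt_one hδ0 hmax1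
  have hm0 : 0 ≤ max s t := hs0.trans (le_max_left _ _)
  have hNδ : (max s t) ^ (N + 1) ≤ δ :=
    (pow_le_pow_of_le_one hm0 hmax1.le (Nat.le_succ N)).trans hN.le
  have hsN : s ^ (N + 1) ≤ δ := (pow_le_pow_left₀ hs0 (le_max_left _ _) _).trans hNδ
  have htN : t ^ (N + 1) ≤ δ := (pow_le_pow_left₀ ht0 (le_max_right _ _) _).trans hNδ
  obtain ⟨v, hv⟩ := (aux_unit S hS x hx (N + 1) (Nat.succ_ne_zero N)).exists_left_inv
  let F : S := (x + 1) ^ (N + 1) * v * ⟨φ P, hmem P⟩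
  have hvz : ∀ z : ↥(L ∪ K), (v : C(↥(L ∪ K), ℂ)) z *
      ((MvPolynomial.eval z.1 G + 1) ^ (N + 1) + (MvPolynomial.eval z.1 G - 1) ^ (N + 1)) = 1 := by
    intro z
    have := congrArg (fun w : S => (w : C(↥(L ∪ K), ℂ)) z) hv
    simpa [x, hφ] using this
  have hFz : ∀ z : ↥(L ∪ K), (F : C(↥(L ∪ K), ℂ)) z =
      (MvPolynomial.eval z.1 G + 1) ^ (N + 1) * (v : C(↥(L ∪ K), ℂ)) z
        * MvPolynomial.eval z.1 P := by
    intro z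
    simp [F, x, hφ]
  have hPB : ∀ z : ↥(L ∪ K), ‖MvPolynomial.eval z.1 P‖ ≤ B := by
    intro z
    rw [← hφ]
    exact (φ P).norm_coe_le_norm z
  have hFS : (F : C(↥(L ∪ K), ℂ)) ∈ closure (φ.range : Set C(↥(L ∪ K), ℂ)) := F.2
  obtain ⟨q, ⟨Q, rfl⟩, hQ⟩ := Metric.mem_closure_iff.1 hFS (ε / 2) (half_pos hε)
  have hQz : ∀ z : ↥(L ∪ K), ‖MvPolynomial.eval z.1 Q - (F : C(↥(L ∪ K), ℂ)) z‖ < ε / 2 := by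
    intro z
    rw [← hφ, ← dist_eq_norm, dist_comm]
    exact (ContinuousMap.dist_apply_le_dist z).trans_lt hQ
  refine ⟨Q, fun z hz => ?_, fun z hz => ?_⟩
  · have h1 := hQz ⟨z, Or.inl hz⟩
    have h2 := hvz ⟨z, Or.inl hz⟩
    rw [hFz] at h1
    have h3 := hPB ⟨z, Or.inl hz⟩
    simp only at h1 h2 h3
    rw [add_comm ((MvPolynomial.eval z G + 1) ^ (N + 1))] at h2
    have h4 := aux_est hδ2 (b := (MvPolynomial.eval z G + 1) ^ (N + 1)) (by
      rw [norm_pow, norm_pow]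
      calc _ ≤ (t * ‖MvPolynomial.eval z G - 1‖) ^ (N + 1) :=
            pow_le_pow_left₀ (norm_nonneg _) (ht z hz) _
        _ = t ^ (N + 1) * ‖MvPolynomial.eval z G - 1‖ ^ (N + 1) := mul_pow _ _ _
        _ ≤ _ := by gcongr) h2
    have h5 := mul_le_mul h4 h3 (norm_nonneg _) (by positivity)
    rw [← norm_mul] at h5
    have h6 := norm_sub_norm_le (MvPolynomial.eval z Q)
      ((MvPolynomial.eval z G + 1) ^ (N + 1) * (v : C(↥(L ∪ K), ℂ)) ⟨z, Or.inl hz⟩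
        * MvPolynomial.eval z P)
    linarith
  · have h1 := hQz ⟨z, Or.inr hz⟩
    have h2 := hvz ⟨z, Or.inr hz⟩
    rw [hFz] at h1
    have h3 := hPB ⟨z, Or.inr hz⟩
    simp only at h1 h2 h3
    have h4 := aux_est hδ2 (b := (MvPolynomial.eval z G - 1) ^ (N + 1)) (by
      rw [norm_pow, norm_pow]
      calc _ ≤ (s * ‖MvPolynomial.eval z G + 1‖) ^ (N + 1) :=
            pow_le_pow_left₀ (norm_nonneg _) (hs z hz) _
        _ = s ^ (N + 1) * ‖MvPolynomial.eval z G + 1‖ ^ (N + 1) := mul_pow _ _ _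
        _ ≤ _ := by gcongr) h2
    have h5 := mul_le_mul h4 h3 (norm_nonneg _) (by positivity)
    rw [← norm_mul] at h5
    have h6 := norm_sub_le (MvPolynomial.eval z Q -
      (MvPolynomial.eval z G + 1) ^ (N + 1) * (v : C(↥(L ∪ K), ℂ)) ⟨z, Or.inr hz⟩
        * MvPolynomial.eval z P) ((MvPolynomial.eval z G - 1) ^ (N + 1) *
          (v : C(↥(L ∪ K), ℂ)) ⟨z, Or.inr hz⟩ * MvPolynomial.eval z P)
    have h7 : MvPolynomial.eval z Q - MvPolynomial.eval z P = MvPolynomial.eval z Q -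
      (MvPolynomial.eval z G + 1) ^ (N + 1) * (v : C(↥(L ∪ K), ℂ)) ⟨z, Or.inr hz⟩
        * MvPolynomial.eval z P - ((MvPolynomial.eval z G - 1) ^ (N + 1) *
          (v : C(↥(L ∪ K), ℂ)) ⟨z, Or.inr hz⟩ * MvPolynomial.eval z P) := by
      linear_combination (MvPolynomial.eval z P) * h2
    rw [h7]
    linarith

/-- nonemptiness criterion for the universal class: a finite linear
combination of the monomials `(z-ζ)^{N_j}` which is uniformly small on `L ⊆ Ω` and
uniformly `ε`-close to `P` on `K`. -/
theorem existence_criterion (n : ℕ) (Ω : Set (Fin n → ℂ))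
    (hΩo : IsOpen Ω) (hΩcv : Convex ℝ Ω)
    (ζ : Fin n → ℂ) (hζ : ζ ∈ Ω)
    (K : Set (Fin n → ℂ)) (hKcpt : IsCompact K) (hKcv : Convex ℝ K) (hKΩ : K ∩ Ω = ∅)
    (Nj : ℕ → Fin n → ℕ) (hNj : Function.Bijective Nj)
    (P : MvPolynomial (Fin n) ℂ)
    (L : Set (Fin n → ℂ)) (hLcpt : IsCompact L) (hLsub : L ⊆ Ω)
    (ε : ℝ) (hε : 0 < ε) :
    ∃ (M : ℕ) (b : ℕ → ℂ),
      (∀ z ∈ L, ‖∑ j ∈ Finset.range (M + 1), b j * ∏ i, (z i - ζ i) ^ (Nj j i)‖ < ε) ∧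
      (∀ z ∈ K,
        ‖(∑ j ∈ Finset.range (M + 1), b j * ∏ i, (z i - ζ i) ^ (Nj j i)) - mvEval P z‖ < ε) := by
  obtain ⟨f, u, hfΩ, hfK⟩ := RCLike.geometric_hahn_banach_open (𝕜 := ℂ) hΩcv hΩo hKcv
    (by rw [Set.disjoint_iff_inter_eq_empty, Set.inter_comm]; exact hKΩ)
  have hfc : Continuous fun z => (f z).re := Complex.continuous_re.comp f.continuous
  obtain ⟨c, hcu, hcL⟩ : ∃ c : ℝ, c < u ∧ ∀ z ∈ L, (f z).re < c := by
    rcases L.eq_empty_or_nonempty with rfl | hne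
    · exact ⟨u - 1, by linarith, by simp⟩
    obtain ⟨a, ha, hmax⟩ := hLcpt.exists_isMaxOn hne hfc.continuousOn
    have hau : (f a).re < u := hfΩ a (hLsub ha)
    refine ⟨((f a).re + u) / 2, by linarith, fun z hz => ?_⟩
    have : (f z).re ≤ (f a).re := hmax hz
    linarith
  let G : MvPolynomial (Fin n) ℂ :=
    ∑ i, MvPolynomial.C (f (Pi.single i 1)) * MvPolynomial.X i - MvPolynomial.C (c : ℂ)
  have hG : ∀ z, MvPolynomial.eval z G = f z - c := by
    intro z
    have hz : f z = ∑ i, f (Pi.single i 1) * z i := by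
      conv_lhs => rw [pi_eq_sum_univ' z, map_sum]
      refine Finset.sum_congr rfl fun i _ => ?_
      rw [map_smul, smul_eq_mul, mul_comm]
    rw [hz]
    simp [G, map_sum]
  obtain ⟨Q, hQL, hQK⟩ := aux_main K L hKcpt hLcpt G P
    (fun z hz => by rw [hG]; simpa using hcL z hz)
    (fun z hz => by
      rw [hG]
      have : u ≤ (f z).re := hfK z hz
      simp
      linarith) ε hε
  obtain ⟨M, b, hMb⟩ := aux_expand Nj hNj ζ Q
  refine ⟨M, b, fun z hz => ?_, fun z hz => ?_⟩
  · rw [hMb]; exact hQL z hz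
  · rw [hMb]; exact hQK z hz

end
end
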